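/- Let K be a field, A = K[x_1, ..., x_n], p ∈ K[x_1] an irreducible polynomial, Ā = (K[x_1]/⟨p⟩)[x_2, ..., x_n], and π : A → Ā the natural ring homomorphism; write F̄ for the entrywise image of F under π. Let F ∈ A^{l×l}. If rank(F̄) = r and the r × r reduced minors of F̄ generate the unit ideal of Ā (i.e. J_r(F̄) = Ā), then there exists U ∈ GL_l(A) such that U·F = diag(1, ..., 1, p, ..., p)·G for some G ∈ A^{l×l}, where the diagonal matrix has exactly r entries equal to 1 and l − r entries equal to p. -/

import Mathlib

/-- The set of all `i × i` minors of a matrix. -/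
def minorsSet {R : Type*} [CommRing R] {l m : ℕ} (i : ℕ)
    (F : Matrix (Fin l) (Fin m) R) : Set R :=
  {a | ∃ (f : Fin i → Fin l) (g : Fin i → Fin m),
      StrictMono f ∧ StrictMono g ∧ a = (F.submatrix f g).det}

/-- `d` is a greatest common divisor of the set `s`. -/
def IsGcdOf {R : Type*} [CommRing R] (d : R) (s : Set R) : Prop :=
  (∀ a ∈ s, d ∣ a) ∧ ∀ c : R, (∀ a ∈ s, c ∣ a) → c ∣ d

/-- The image of a univariate polynomial `p ∈ K[x₁]` in `A = K[x₁, …, x_{n+1}]`,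
sending the variable to `x₁` (the variable of index `0`). -/
noncomputable def polyImage {K : Type*} [CommRing K] (n : ℕ) (p : Polynomial K) :
    MvPolynomial (Fin (n + 1)) K :=
  Polynomial.aeval (MvPolynomial.X 0) p

/-- The natural ring homomorphism
`π : A = K[x₁, …, x_{n+1}] → Ā = (K[x₁]/⟨p⟩)[x₂, …, x_{n+1}]`,
sending `x₁` to the residue class of `x₁` and the other variables to themselves. -/
noncomputable def piBar {K : Type*} [Field K] (n : ℕ) (p : Polynomial K) :
    MvPolynomial (Fin (n + 1)) K →+*
      MvPolynomial (Fin n) (Polynomial K ⧸ Ideal.span {p}) :=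
  (MvPolynomial.aeval (fun i : Fin (n + 1) =>
    Fin.cases (MvPolynomial.C (Ideal.Quotient.mk (Ideal.span {p}) Polynomial.X))
      (fun j => MvPolynomial.X j) i)).toRingHom

/-!
Write `F̄` for the image of `F`. Since the reduced minors of `F̄` generate the unit ideal, Cramer's
rule provides a projector onto the left kernel of `F̄`. This kernel is therefore finitely generated
and projective, hence free by the Quillen–Suslin theorem: by Hilbert's syzygy theorem it is stably
free, and free summands can be cancelled because unimodular rows can be reduced to unit multiples
of basis vectors.

That row reduction is Suslin's. Nagata's change of variables makes an entry of the row monic in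
one variable, and the elements modulo which the value of this variable can be altered by row
operations generate the unit ideal. The operations are performed over `K[x₁][x₂, …, xₙ]` throughout
and only their effect on rows is considered modulo `p`, so that no invertible matrix has to be
lifted afterwards.

A basis vector of the left kernel is a unimodular row, and a matrix from `GL_l(A)` reducing it makes
a row of `F̄` vanish. By induction all rows but `rank F̄` many can be made zero, and the
corresponding rows over `A` lie in `ker π = (p)`.
-/

section Shear

open MvPolynomial

/-- The isomorphism `R[x₀, …, xₙ] ≃ R[x₁, …, xₙ][x₀]` after Nagata's change of variables
`xᵢ ↦ xᵢ + x₀ ^ (N ^ i)`. For `N` larger than all exponents of a polynomial, it sends distinct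
monomials to polynomials of distinct degrees, so that the leading coefficient becomes constant. -/
noncomputable def shearEquiv (R : Type*) [CommRing R] (n N : ℕ) :
    MvPolynomial (Fin (n + 1)) R ≃ₐ[R] Polynomial (MvPolynomial (Fin n) R) :=
  AlgEquiv.ofAlgHom
    (aeval (Fin.cases Polynomial.X
      fun i ↦ Polynomial.X ^ N ^ (i + 1 : ℕ) + Polynomial.C (X i)))
    (Polynomial.eval₂AlgHom (aeval fun i ↦ X i.succ - X 0 ^ N ^ (i + 1 : ℕ)) (X 0)
      fun _ ↦ Commute.all _ _)
    (by ext : 2 <;> [ext i : 2; skip] <;> simp)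
    (by ext i : 1; cases i using Fin.cases <;> simp)

variable {R S : Type*} [CommRing R] [CommRing S] {n N : ℕ}

theorem shearEquiv_C (a : R) : shearEquiv R n N (C a) = Polynomial.C (C a) :=
  (shearEquiv R n N).commutes a

theorem shearEquiv_X_zero : shearEquiv R n N (X 0) = Polynomial.X := by
  simp [shearEquiv]

theorem shearEquiv_X_succ (i : Fin n) :
    shearEquiv R n N (X i.succ) = Polynomial.X ^ N ^ (i + 1 : ℕ) + Polynomial.C (X i) := by
  simp [shearEquiv]

theorem map_shearEquiv (φ : R →+* S) (f : MvPolynomial (Fin (n + 1)) R) :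
    (shearEquiv R n N f).map (map φ) = shearEquiv S n N (map φ f) := by
  suffices h : (Polynomial.mapRingHom (map φ)).comp (shearEquiv R n N : _ →+* _) =
      (shearEquiv S n N : _ →+* _).comp (map φ) from congr($h f)
  refine ringHom_ext (fun a ↦ by simp [shearEquiv_C]) fun i ↦ ?_
  cases i using Fin.cases <;> simp [shearEquiv_X_zero, shearEquiv_X_succ]

theorem monic_shearEquiv_X (hN : N ≠ 0) (i : Fin (n + 1)) : (shearEquiv R n N (X i)).Monic := by
  cases i using Fin.cases with
  | zero => exact shearEquiv_X_zero (R := R) ▸ Polynomial.monic_X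
  | succ i => exact shearEquiv_X_succ (R := R) i ▸ Polynomial.monic_X_pow_add_C _ (pow_ne_zero _ hN)

theorem natDegree_shearEquiv_X [Nontrivial R] (i : Fin (n + 1)) :
    (shearEquiv R n N (X i)).natDegree = N ^ (i : ℕ) := by
  cases i using Fin.cases with
  | zero => simp [shearEquiv_X_zero]
  | succ i => rw [shearEquiv_X_succ, Polynomial.natDegree_X_pow_add_C, Fin.val_succ]

theorem shearEquiv_monomial (v : Fin (n + 1) →₀ ℕ) (a : R) :
    shearEquiv R n N (monomial v a) =
      Polynomial.C (C a) * ∏ i, shearEquiv R n N (X i) ^ v i := by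
  rw [monomial_eq, Finsupp.prod_fintype _ _ fun i ↦ pow_zero _, map_mul, map_prod, shearEquiv_C]
  simp only [map_pow]

theorem shearEquiv_eq_sum (f : MvPolynomial (Fin (n + 1)) R) :
    shearEquiv R n N f = ∑ v ∈ f.support,
      Polynomial.C (C (f.coeff v)) * ∏ i, shearEquiv R n N (X i) ^ v i := by
  conv_lhs => rw [f.as_sum, map_sum]
  simp only [shearEquiv_monomial]

theorem natDegree_prod_shearEquiv_X_pow [Nontrivial R] (hN : N ≠ 0) (v : Fin (n + 1) →₀ ℕ) :
    (∏ i, shearEquiv R n N (X i) ^ v i).natDegree = ∑ i, v i * N ^ (i : ℕ) := by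
  rw [Polynomial.natDegree_prod_of_monic _ _ fun i _ ↦ (monic_shearEquiv_X hN i).pow _]
  simp only [(monic_shearEquiv_X hN _).natDegree_pow, natDegree_shearEquiv_X]

theorem eq_of_sum_mul_pow_eq {v w : Fin n → ℕ} (hv : ∀ i, v i < N) (hw : ∀ i, w i < N)
    (h : ∑ i, v i * N ^ (i : ℕ) = ∑ i, w i * N ^ (i : ℕ)) : v = w := by
  have hdigits : (fun i ↦ ⟨v i, hv i⟩ : Fin n → Fin N) = fun i ↦ ⟨w i, hw i⟩ :=
    finFunctionFinEquiv.injective (Fin.ext (by simpa only [finFunctionFinEquiv_apply] using h))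
  exact funext fun i ↦ congrArg Fin.val (congrFun hdigits i)

theorem exists_leadingCoeff_sum_C_mul {α A : Type*} [CommRing A] {s : Finset α} (hs : s.Nonempty)
    {c : α → A} (hc : ∀ x ∈ s, c x ≠ 0) {q : α → Polynomial A} (hq : ∀ x ∈ s, (q x).Monic)
    (hdeg : Set.InjOn (fun x ↦ (q x).natDegree) s) :
    ∃ x ∈ s, (∑ y ∈ s, Polynomial.C (c y) * q y).leadingCoeff = c x := by
  obtain ⟨x, hx, hmax⟩ := s.exists_max_image (fun y ↦ (q y).natDegree) hs
  have hcoeff : (∑ y ∈ s, Polynomial.C (c y) * q y).coeff (q x).natDegree = c x := by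
    rw [Polynomial.finsetSum_coeff, Finset.sum_eq_single_of_mem x hx fun y hy hyx ↦ ?_]
    · rw [Polynomial.coeff_C_mul, (hq x hx).coeff_natDegree, mul_one]
    · rw [Polynomial.coeff_C_mul, Polynomial.coeff_eq_zero_of_natDegree_lt, mul_zero]
      exact (hmax y hy).lt_of_ne fun h ↦ hyx (hdeg hy hx h)
  have hnat : (∑ y ∈ s, Polynomial.C (c y) * q y).natDegree = (q x).natDegree :=
    Polynomial.natDegree_eq_of_le_of_coeff_ne_zero
      (Polynomial.natDegree_sum_le_of_forall_le _ _ fun y hy ↦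
        (Polynomial.natDegree_C_mul_le _ _).trans (hmax y hy))
      (hcoeff ▸ hc x hx)
  exact ⟨x, hx, by rw [Polynomial.leadingCoeff, hnat, hcoeff]⟩

theorem exists_leadingCoeff_shearEquiv {f : MvPolynomial (Fin (n + 1)) R} (hf : f ≠ 0) :
    ∃ N, ∃ v ∈ f.support, (shearEquiv R n N f).leadingCoeff = C (f.coeff v) := by
  have : Nontrivial R := nontrivial_of_ne _ _ (exists_coeff_ne_zero hf).choose_spec
  refine ⟨f.totalDegree + 1, ?_⟩
  have hlt : ∀ v ∈ f.support, ∀ i, v i < f.totalDegree + 1 := fun v hv i ↦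
    Nat.lt_succ_of_le ((monomial_le_degreeOf i hv).trans (degreeOf_le_totalDegree f i))
  rw [shearEquiv_eq_sum]
  refine exists_leadingCoeff_sum_C_mul (support_nonempty.mpr hf) (fun v hv ↦ by simpa using hv)
    (fun v _ ↦ Polynomial.monic_prod_of_monic _ _ fun i _ ↦
      (monic_shearEquiv_X (Nat.succ_ne_zero _) i).pow _) fun v hv w hw h ↦ ?_
  simp only [natDegree_prod_shearEquiv_X_pow (Nat.succ_ne_zero _)] at h
  exact DFunLike.coe_injective (eq_of_sum_mul_pow_eq (hlt v hv) (hlt w hw) h)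

theorem exists_monic_shearEquiv_C_mul {k : Type*} [Field k] {f : MvPolynomial (Fin (n + 1)) k}
    (hf : f ≠ 0) : ∃ N, ∃ a : k, a ≠ 0 ∧ (shearEquiv k n N (C a * f)).Monic := by
  obtain ⟨N, v, hv, h⟩ := exists_leadingCoeff_shearEquiv hf
  refine ⟨N, (f.coeff v)⁻¹, inv_ne_zero (mem_support_iff.mp hv), ?_⟩
  rw [map_mul, shearEquiv_C]
  apply Polynomial.monic_C_mul_of_mul_leadingCoeff_eq_one
  rw [h, ← map_mul, inv_mul_cancel₀ (mem_support_iff.mp hv), map_one]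

end Shear

section UnimodularRow

open Matrix

/-- A row whose entries generate the unit ideal. -/
def IsUnimodularRow {ι R : Type*} [Fintype ι] [CommRing R] (v : ι → R) : Prop :=
  ∃ w, w ⬝ᵥ v = 1

variable {ι R S : Type*} [Fintype ι] [CommRing R] [CommRing S] {v : ι → R}

theorem IsUnimodularRow.of_linearMap (f : (ι → R) →ₗ[R] R) (h : f v = 1) :
    IsUnimodularRow v := by
  classical
  refine ⟨fun i ↦ f fun j ↦ if i = j then 1 else 0, ?_⟩
  rw [dotProduct_comm]
  exact (f.pi_apply_eq_sum_univ v).symm.trans h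

theorem IsUnimodularRow.map (h : IsUnimodularRow v) (f : R →+* S) : IsUnimodularRow (f ∘ v) := by
  obtain ⟨w, hw⟩ := h
  exact ⟨f ∘ w, by rw [← RingHom.map_dotProduct, hw, map_one]⟩

theorem IsUnimodularRow.smul (h : IsUnimodularRow v) {a : R} (ha : IsUnit a) :
    IsUnimodularRow (a • v) := by
  obtain ⟨w, hw⟩ := h
  obtain ⟨b, hb⟩ := ha.exists_left_inv
  exact ⟨b • w, by rw [smul_dotProduct, dotProduct_smul, hw, smul_eq_mul, smul_eq_mul, mul_one, hb]⟩

theorem IsUnimodularRow.exists_ne_zero [Nontrivial R] (h : IsUnimodularRow v) : ∃ i, v i ≠ 0 := by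
  by_contra! hv
  obtain ⟨w, hw⟩ := h
  simp [dotProduct, hv] at hw

end UnimodularRow

open Matrix in
/-- The relation on rows over `D` generated by the invertible matrices over `C`, acting through
`φ : C → D`. Keeping track of `φ` records that the transformation lifts to `C`. -/
def RowEquiv {ι C D : Type*} [Fintype ι] [DecidableEq ι] [CommRing C] [CommRing D]
    (φ : C →+* D) (v w : ι → D) : Prop :=
  ∃ U : GL ι C, v ᵥ* (U : Matrix ι ι C).map φ = w

namespace RowEquiv

open Matrix

variable {ι C D : Type*} [Fintype ι] [DecidableEq ι] [CommRing C] [CommRing D]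
  {φ : C →+* D} {u v w : ι → D}

theorem refl (φ : C →+* D) (v : ι → D) : RowEquiv φ v v :=
  ⟨1, by simp⟩

theorem trans (h : RowEquiv φ u v) (h' : RowEquiv φ v w) : RowEquiv φ u w := by
  obtain ⟨U, rfl⟩ := h
  obtain ⟨V, rfl⟩ := h'
  exact ⟨U * V, by rw [Units.val_mul, Matrix.map_mul, vecMul_vecMul]⟩

theorem symm (h : RowEquiv φ u v) : RowEquiv φ v u := by
  obtain ⟨U, rfl⟩ := h
  exact ⟨U⁻¹, by rw [vecMul_vecMul, ← Matrix.map_mul, Units.mul_inv]; simp⟩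

theorem smul (h : RowEquiv φ u v) (a : D) : RowEquiv φ (a • u) (a • v) := by
  obtain ⟨U, rfl⟩ := h
  exact ⟨U, by rw [smul_vecMul]⟩

theorem map {C' D' : Type*} [CommRing C'] [CommRing D'] {φ' : C' →+* D'}
    (f : C →+* C') (g : D →+* D') (hfg : φ'.comp f = g.comp φ) (h : RowEquiv φ u v) :
    RowEquiv φ' (g ∘ u) (g ∘ v) := by
  obtain ⟨U, rfl⟩ := h
  have hφ (a : C) : φ' (f a) = g (φ a) := congr($hfg a)
  refine ⟨GeneralLinearGroup.map f U, ?_⟩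
  ext i
  simp [vecMul, dotProduct, hφ]

theorem of_linearEquiv (φ : C →+* D) (e : (ι → C) ≃ₗ[C] (ι → C)) (v : ι → C) :
    RowEquiv φ (φ ∘ v) (φ ∘ e v) := by
  let U : GL ι C := ⟨LinearMap.toMatrixRight' e, LinearMap.toMatrixRight' e.symm,
    by simp [← LinearMap.toMatrixRight'_comp], by simp [← LinearMap.toMatrixRight'_comp]⟩
  have hU : e v = v ᵥ* (U : Matrix ι ι C) := by
    rw [← toLinearMapRight'_apply]
    simp [U]
  refine ⟨U, ?_⟩
  rw [hU]
  ext i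
  rw [Function.comp_apply, RingHom.map_vecMul]

theorem comp_perm (φ : C →+* D) (σ : Equiv.Perm ι) (v : ι → C) :
    RowEquiv φ (φ ∘ v) (φ ∘ v ∘ σ) :=
  of_linearEquiv φ (LinearEquiv.funCongrLeft C C σ) v

theorem transvection (φ : C →+* D) (v : ι → C) {a b : ι → C} (hab : a ⬝ᵥ b = 0) :
    RowEquiv φ (φ ∘ v) (φ ∘ (v + (a ⬝ᵥ v) • b)) :=
  of_linearEquiv φ (LinearEquiv.transvection (f := dotProductBilin C C a) hab) v

end RowEquiv

section ActOnPair

open Matrix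

variable {ι C D : Type*} [DecidableEq ι] [CommRing C] [CommRing D]

/-- The endomorphism of `ι → C` acting on the coordinates `i` and `j` by
`(x, y) ↦ (a x + b y, c x + d y)` and fixing the others. -/
def actOnPair (i j : ι) (a b c d : C) : (ι → C) →ₗ[C] (ι → C) :=
  LinearMap.pi fun t ↦
    if t = i then a • LinearMap.proj i + b • LinearMap.proj j
    else if t = j then c • LinearMap.proj i + d • LinearMap.proj j
    else LinearMap.proj t

variable {i j : ι} {a b c d : C}

theorem actOnPair_apply_left (v : ι → C) : actOnPair i j a b c d v i = a * v i + b * v j := by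
  simp [actOnPair]

theorem actOnPair_apply_right (hij : i ≠ j) (v : ι → C) :
    actOnPair i j a b c d v j = c * v i + d * v j := by
  simp [actOnPair, hij.symm]

theorem actOnPair_apply_of_ne (v : ι → C) {t : ι} (hi : t ≠ i) (hj : t ≠ j) :
    actOnPair i j a b c d v t = v t := by
  simp [actOnPair, hi, hj]

theorem actOnPair_adjugate_comp (hij : i ≠ j) (hdet : a * d - b * c = 1) :
    actOnPair i j d (-b) (-c) a ∘ₗ actOnPair i j a b c d = LinearMap.id := by
  refine LinearMap.ext fun v ↦ funext fun t ↦ ?_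
  rw [LinearMap.comp_apply, LinearMap.id_apply]
  by_cases hti : t = i
  · rw [hti, actOnPair_apply_left, actOnPair_apply_left, actOnPair_apply_right hij]
    linear_combination v i * hdet
  by_cases htj : t = j
  · rw [htj, actOnPair_apply_right hij, actOnPair_apply_left, actOnPair_apply_right hij]
    linear_combination v j * hdet
  · rw [actOnPair_apply_of_ne _ hti htj, actOnPair_apply_of_ne _ hti htj]

theorem RowEquiv.actOnPair_apply [Fintype ι] (φ : C →+* D) (hij : i ≠ j)
    (hdet : a * d - b * c = 1) (v : ι → C) : RowEquiv φ (φ ∘ v) (φ ∘ actOnPair i j a b c d v) := by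
  have hinv : actOnPair i j a b c d ∘ₗ actOnPair i j d (-b) (-c) a = LinearMap.id := by
    simpa only [neg_neg] using
      actOnPair_adjugate_comp (a := d) (b := -b) (c := -c) (d := a) hij (by linear_combination hdet)
  exact RowEquiv.of_linearEquiv φ
    (LinearEquiv.ofLinearMap _ _ hinv (actOnPair_adjugate_comp hij hdet)) v

theorem RowEquiv.of_eq_add_mul [Fintype ι] (φ : C →+* D) {v w : ι → C} (hi : w i = v i)
    (hj : w j = v j) (β : ι → C)
    (hβ : ∀ t, t ≠ i → t ≠ j → w t = v t + (a * v i + b * v j) * β t) :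
    RowEquiv φ (φ ∘ v) (φ ∘ w) := by
  let α : ι → C := Pi.single i a + Pi.single j b
  have hα (x : ι → C) : α ⬝ᵥ x = a * x i + b * x j := by simp [α, add_dotProduct]
  have hw : w = v + (α ⬝ᵥ v) • fun t ↦ if t = i ∨ t = j then 0 else β t := by
    ext t
    by_cases hti : t = i
    · simp [hti, hi]
    by_cases htj : t = j
    · simp [htj, hj]
    · simp [hti, htj, hα, hβ]
  rw [hw]
  exact RowEquiv.transvection φ v (by simp [hα])

theorem RowEquiv.of_pair [Fintype ι] (φ : C →+* D) (hij : i ≠ j) (hdet : a * d - b * c = 1)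
    {v w : ι → C} (hi : w i = a * v i + b * v j) (hj : w j = c * v i + d * v j) {x y : C}
    (β : ι → C) (hβ : ∀ t, t ≠ i → t ≠ j → w t = v t + (x * w i + y * w j) * β t) :
    RowEquiv φ (φ ∘ v) (φ ∘ w) := by
  have hi' : w i = actOnPair i j a b c d v i := by rw [actOnPair_apply_left, hi]
  have hj' : w j = actOnPair i j a b c d v j := by rw [actOnPair_apply_right hij, hj]
  refine (RowEquiv.actOnPair_apply φ hij hdet v).trans
    (RowEquiv.of_eq_add_mul φ (a := x) (b := y) hi' hj' β fun t hti htj ↦ ?_)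
  rw [hβ t hti htj, hi', hj', actOnPair_apply_of_ne v hti htj]

end ActOnPair

section DividedDifference

open Polynomial

variable {B : Type*} [CommRing B]

theorem comp_add_mul_eq_re_add_mul_im {c u : B[X]} (hu : u * u = c * u) (b b' f : B[X]) :
    f.comp (b + u * b') = (aeval (⟨b, b'⟩ : QuadraticAlgebra B[X] 0 c) f).re +
      u * (aeval (⟨b, b'⟩ : QuadraticAlgebra B[X] 0 c) f).im := by
  let lift : QuadraticAlgebra B[X] 0 c →ₐ[B[X]] B[X] := QuadraticAlgebra.lift ⟨u, by simpa using hu⟩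
  have h : aeval (b + u * b') = (lift.restrictScalars B).comp (aeval ⟨b, b'⟩) := by
    ext
    simp [lift, mul_comm u, QuadraticAlgebra.lift]
  simpa [comp, aeval_def, lift, QuadraticAlgebra.lift, mul_comm u] using congr($h f)

/-- The divided difference `(f(b + c b') - f(b)) / c` of a polynomial `f`. Taking the `ω`-component
of `f(b + ω b')`, where `ω² = c ω`, avoids the division and makes sense for zero divisors `c`. -/
noncomputable def dividedDifference (c b b' f : B[X]) : B[X] :=
  (aeval (⟨b, b'⟩ : QuadraticAlgebra B[X] 0 c) f).im

theorem comp_add_mul_eq_add_dividedDifference (c b b' f : B[X]) :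
    f.comp (b + c * b') = f.comp b + c * dividedDifference c b b' f := by
  have hre := comp_add_mul_eq_re_add_mul_im (c := c) (u := 0) (by simp) b b' f
  rw [zero_mul, zero_mul, add_zero, add_zero] at hre
  rw [comp_add_mul_eq_re_add_mul_im rfl, ← hre, dividedDifference]

theorem dividedDifference_add (c b b' f g : B[X]) :
    dividedDifference c b b' (f + g) = dividedDifference c b b' f + dividedDifference c b b' g := by
  simp [dividedDifference]

theorem dividedDifference_C (c b b' : B[X]) (a : B) : dividedDifference c b b' (C a) = 0 := by
  rw [dividedDifference, aeval_C, IsScalarTower.algebraMap_apply B B[X]]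
  simp

theorem dividedDifference_mul (c b b' f g : B[X]) :
    dividedDifference c b b' (f * g) =
      f.comp b * dividedDifference c b b' g + dividedDifference c b b' f * g.comp b +
        c * (dividedDifference c b b' f * dividedDifference c b b' g) := by
  have hre (f : B[X]) : f.comp b = (aeval (⟨b, b'⟩ : QuadraticAlgebra B[X] 0 c) f).re := by
    simpa using comp_add_mul_eq_re_add_mul_im (c := c) (u := 0) (by simp) b b' f
  simp only [dividedDifference, map_mul, QuadraticAlgebra.im_mul, hre]
  ring

end DividedDifference

section Suslin

open Matrix Polynomial

variable {ι B D : Type*} [Fintype ι] [DecidableEq ι] [CommRing B] [CommRing D]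

theorem RowEquiv.comp_add_C_mul (φ : B[X] →+* D) (f : ι → B[X]) {i j : ι} (hij : i ≠ j)
    {g h : B[X]} {c : B} (hc : f i * g + f j * h = C c) (b b' : B[X]) :
    RowEquiv φ (fun t ↦ φ ((f t).comp b)) (fun t ↦ φ ((f t).comp (b + C c * b'))) := by
  set δ := dividedDifference (C c) b b' with hδ
  have hb : (f i).comp b * g.comp b + (f j).comp b * h.comp b = C c := by
    simpa using congr(($hc).comp b)
  have hb' : (f i).comp (b + C c * b') * g.comp (b + C c * b') +
      (f j).comp (b + C c * b') * h.comp (b + C c * b') = C c := by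
    simpa using congr(($hc).comp (b + C c * b'))
  have hleibniz : (f i).comp b * δ g + δ (f i) * g.comp b + C c * (δ (f i) * δ g) +
      ((f j).comp b * δ h + δ (f j) * h.comp b + C c * (δ (f j) * δ h)) = 0 := by
    rw [hδ, ← dividedDifference_mul, ← dividedDifference_mul, ← dividedDifference_add, hc,
      dividedDifference_C]
  simp only [comp_add_mul_eq_add_dividedDifference, ← hδ] at hb' ⊢
  exact RowEquiv.of_pair φ hij (v := fun t ↦ (f t).comp b)
    (w := fun t ↦ (f t).comp b + C c * δ (f t))
    (a := 1 + g.comp b * δ (f i) + (f j).comp b * δ h)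
    (b := h.comp b * δ (f i) - (f i).comp b * δ h)
    (c := g.comp b * δ (f j) - (f j).comp b * δ g)
    (d := 1 + h.comp b * δ (f j) + (f i).comp b * δ g)
    (x := g.comp b + C c * δ g) (y := h.comp b + C c * δ h)
    (by linear_combination hleibniz + (δ (f i) * δ g + δ (f j) * δ h) * hb)
    (by linear_combination -δ (f i) * hb) (by linear_combination -δ (f j) * hb)
    (fun t ↦ δ (f t)) fun t _ _ ↦ by linear_combination -δ (f t) * hb'

end Suslin

section StableRange

open Matrix

theorem exists_isCoprime_add_mul {R : Type*} [CommRing R] [IsDomain R] [IsPrincipalIdealRing R]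
    {a b f : R} (hf : f ≠ 0) (hab : IsCoprime a b) : ∃ t, IsCoprime f (a + t * b) := by
  induction f using UniqueFactorizationMonoid.induction_on_prime with
  | h₁ => exact absurd rfl hf
  | h₂ u hu =>
    obtain ⟨s, hs⟩ := hu.exists_left_inv
    exact ⟨0, s, 0, by rw [hs, zero_mul, add_zero]⟩
  | h₃ f π hf' hπ ih =>
    obtain ⟨t, ht⟩ := ih hf'
    by_cases hdvd : π ∣ a + t * b
    · have hcop : IsCoprime f (a + (t + f) * b) := by
        simpa only [add_mul, ← add_assoc] using ht.add_mul_left_right b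
      refine ⟨t + f, IsCoprime.mul_left (hπ.irreducible.coprime_iff_not_dvd.mpr fun h ↦ ?_) hcop⟩
      have hfb : π ∣ f * b := (dvd_add_right hdvd).mp (by rwa [add_assoc, ← add_mul])
      rcases hπ.dvd_or_dvd hfb with hπf | hπb
      · exact hπ.not_isUnit (ht.isUnit_of_dvd' hπf hdvd)
      · exact hπ.not_isUnit (hab.isUnit_of_dvd' ((dvd_add_left (hπb.mul_left t)).mp hdvd) hπb)
    · exact ⟨t, IsCoprime.mul_left (hπ.irreducible.coprime_iff_not_dvd.mpr hdvd) ht⟩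

theorem IsUnimodularRow.exists_isCoprime_add_dotProduct {ι R : Type*} [Fintype ι]
    [CommRing R] [IsDomain R] [IsPrincipalIdealRing R] {v : ι → R} (hv : IsUnimodularRow v)
    {i : ι} (hi : v i ≠ 0) (j : ι) : ∃ a : ι → R, a j = 0 ∧ IsCoprime (v i) (v j + a ⬝ᵥ v) := by
  classical
  obtain ⟨w, hw⟩ := hv
  have hsplit : w j * v j + Function.update w j 0 ⬝ᵥ v = 1 := by
    rw [← hw, dotProduct, dotProduct, ← Finset.add_sum_erase _ _ (Finset.mem_univ j),
      ← Finset.add_sum_erase (a := j) _ (fun t ↦ w t * v t) (Finset.mem_univ j)]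
    simp only [Function.update_self, zero_mul, zero_add]
    exact congrArg _ (Finset.sum_congr rfl fun t ht ↦ by
      rw [Function.update_of_ne (Finset.ne_of_mem_erase ht)])
  obtain ⟨t, ht⟩ := exists_isCoprime_add_mul hi
    (⟨w j, 1, by rw [one_mul, hsplit]⟩ : IsCoprime (v j) (Function.update w j 0 ⬝ᵥ v))
  exact ⟨t • Function.update w j 0, by simp, by rwa [smul_dotProduct, smul_eq_mul]⟩

end StableRange

section Suslin

open Matrix Polynomial

theorem exists_isUnit_map_mul_add_mul_eq_C {B k : Type*} [CommRing B] [CommRing k] (ψ : B →+* k)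
    {f q : B[X]} (hf : f.Monic) (hcop : IsCoprime (f.map ψ) (q.map ψ)) :
    ∃ c, IsUnit (ψ c) ∧ ∃ g h, f * g + q * h = C c := by
  rcases subsingleton_or_nontrivial k with _ | _
  · exact ⟨0, isUnit_of_subsingleton _, 0, 0, by simp⟩
  -- The degree bound `q.natDegree + 1` for `q` is positive and survives the reduction by `ψ`.
  refine ⟨f.resultant q f.natDegree (q.natDegree + 1), ?_, ?_⟩
  · have hdeg : q.natDegree + 1 = (q.map ψ).natDegree + (q.natDegree + 1 - (q.map ψ).natDegree) :=
      (Nat.add_sub_cancel' (natDegree_map_le.trans (Nat.le_succ _))).symm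
    have hlead : (f.map ψ).coeff f.natDegree = 1 := by rw [coeff_map, hf.coeff_natDegree, map_one]
    rw [← resultant_map_map, hdeg, resultant_add_right_deg _ _ _ _ _ le_rfl, hlead, one_pow,
      one_mul, ← hf.natDegree_map ψ]
    exact (isUnit_resultant_iff_isCoprime (hf.map ψ)).mpr hcop
  · obtain ⟨g, h, -, -, hgh⟩ := exists_mul_add_mul_eq_C_resultant f q (m := f.natDegree)
      (n := q.natDegree + 1) le_rfl (Nat.le_succ _) (Or.inr (Nat.succ_ne_zero _))
    exact ⟨g, h, hgh⟩

variable {ι B : Type*} [Fintype ι] [CommRing B]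

theorem exists_map_ne_zero_mul_add_mul_eq_C {k : Type*} [Field k] {ψ : B →+* k}
    (hψ : Function.Surjective ψ) {f : ι → B[X]} (hf : IsUnimodularRow (mapRingHom ψ ∘ f)) {i : ι}
    (hi : (f i).Monic) (j : ι) :
    ∃ c, ψ c ≠ 0 ∧ ∃ a : ι → B[X], a j = 0 ∧ ∃ g h, f i * g + (f j + a ⬝ᵥ f) * h = C c := by
  classical
  obtain ⟨a', haj, hcop⟩ := hf.exists_isCoprime_add_dotProduct (hi.map ψ).ne_zero j
  obtain ⟨s, hs⟩ := (Polynomial.map_surjective ψ hψ).hasRightInverse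
  have ha : mapRingHom ψ ∘ Function.update (s ∘ a') j 0 = a' := by
    ext1 t
    by_cases htj : t = j
    · simp [htj, haj]
    · simp [htj, hs (a' t)]
  rw [Function.comp_apply, ← ha, ← RingHom.map_dotProduct, Function.comp_apply, ← map_add,
    coe_mapRingHom] at hcop
  obtain ⟨c, hc, g, h, hgh⟩ := exists_isUnit_map_mul_add_mul_eq_C ψ hi hcop
  exact ⟨c, hc.ne_zero, _, Function.update_self .., g, h, hgh⟩

variable {D : Type*} [CommRing D] [DecidableEq ι]

/-- The constants `c` such that the values of the row `f` at points congruent modulo `c` are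
equivalent. For a unimodular row with a monic entry it is the unit ideal, which is checked one
maximal ideal at a time. -/
def suslinIdeal (Φ : B[X] →+* D) (f : ι → B[X]) : Ideal B where
  carrier := {c | ∀ b b' : B[X],
    RowEquiv Φ (fun t ↦ Φ ((f t).comp b)) (fun t ↦ Φ ((f t).comp (b + C c * b')))}
  add_mem' {c c'} hc hc' b b' := by
    simpa only [map_add, add_mul, add_assoc] using (hc b b').trans (hc' (b + C c * b') b')
  zero_mem' b b' := by simpa using RowEquiv.refl Φ _
  smul_mem' r c hc b b' := by
    simpa only [smul_eq_mul, map_mul, mul_left_comm, mul_assoc] using hc b (C r * b')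

theorem mem_suslinIdeal_of_map_C_eq_zero {Φ : B[X] →+* D} (f : ι → B[X]) {c : B}
    (hc : Φ (C c) = 0) : c ∈ suslinIdeal Φ f := fun b b' ↦ by
  simpa only [comp_add_mul_eq_add_dividedDifference, map_add, map_mul, hc, zero_mul, add_zero]
    using RowEquiv.refl Φ _

theorem mem_suslinIdeal_of_mul_add_mul_eq_C (Φ : B[X] →+* D) {f a : ι → B[X]} {i j : ι}
    (hij : i ≠ j) (haj : a j = 0) {g h : B[X]} {c : B}
    (hc : f i * g + (f j + a ⬝ᵥ f) * h = C c) : c ∈ suslinIdeal Φ f := fun b b' ↦ by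
  let f' : ι → B[X] := f + (a ⬝ᵥ f) • Pi.single j 1
  have hf' (b : B[X]) : RowEquiv Φ (fun t ↦ Φ ((f t).comp b)) (fun t ↦ Φ ((f' t).comp b)) := by
    have hval : (fun t ↦ (f' t).comp b) = (fun t ↦ (f t).comp b) +
        ((fun t ↦ (a t).comp b) ⬝ᵥ fun t ↦ (f t).comp b) • Pi.single j 1 := by
      ext1 t
      by_cases htj : t = j
      · simp [htj, f', dotProduct, sum_comp]
      · simp [htj, f']
    have h := RowEquiv.transvection Φ (fun t ↦ (f t).comp b) (a := fun t ↦ (a t).comp b)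
      (b := Pi.single j 1) (by simp [haj])
    rwa [← hval] at h
  have hc' : f' i * g + f' j * h = C c := by simpa [f', hij] using hc
  exact ((hf' b).trans (RowEquiv.comp_add_C_mul Φ f' hij hc' b b')).trans (hf' _).symm

theorem suslinIdeal_eq_top {φ : B →+* D} (hφ : Function.Surjective φ) {f : ι → B[X]}
    (hf : IsUnimodularRow (mapRingHom φ ∘ f)) {i j : ι} (hij : i ≠ j) (hi : (f i).Monic) :
    suslinIdeal (mapRingHom φ) f = ⊤ := by
  by_contra hne
  obtain ⟨m, hm, hle⟩ := Ideal.exists_le_maximal _ hne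
  let _ := Ideal.Quotient.field m
  have hker : RingHom.ker φ ≤ RingHom.ker (Ideal.Quotient.mk m) := fun c hc ↦ by
    rw [Ideal.mk_ker]
    exact hle (mem_suslinIdeal_of_map_C_eq_zero f (by simpa using hc))
  let χ : D →+* B ⧸ m := φ.liftOfSurjective hφ ⟨Ideal.Quotient.mk m, hker⟩
  have hχ : χ.comp φ = Ideal.Quotient.mk m := φ.liftOfRightInverse_comp _ _ _
  have hfm : IsUnimodularRow (mapRingHom (Ideal.Quotient.mk m) ∘ f) := by
    simpa only [← hχ, ← mapRingHom_comp, RingHom.coe_comp, Function.comp_assoc] using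
      hf.map (mapRingHom χ)
  obtain ⟨c, hc, a, haj, g, h, hgh⟩ :=
    exists_map_ne_zero_mul_add_mul_eq_C Ideal.Quotient.mk_surjective hfm hi j
  exact hc (Ideal.Quotient.eq_zero_iff_mem.mpr
    (hle (mem_suslinIdeal_of_mul_add_mul_eq_C _ hij haj hgh)))

theorem RowEquiv.map_coeff_zero {φ : B →+* D} (hφ : Function.Surjective φ) {f : ι → B[X]}
    (hf : IsUnimodularRow (mapRingHom φ ∘ f)) {i j : ι} (hij : i ≠ j) (hi : (f i).Monic) :
    RowEquiv (mapRingHom φ) (mapRingHom φ ∘ f) (fun t ↦ C (φ ((f t).coeff 0))) := by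
  have h1 : (1 : B) ∈ suslinIdeal (mapRingHom φ) f := suslinIdeal_eq_top hφ hf hij hi ▸ trivial
  simpa [coeff_zero_eq_eval_zero, Function.comp_def] using (h1 0 X).symm

end Suslin

section ReducesToUnit

open Matrix

variable {ι C D : Type*} [Fintype ι] [DecidableEq ι] [CommRing C] [CommRing D]

/-- Up to invertible matrices that lift along `φ`, the row `v` is a unit multiple of every basis
vector: the form in which the Quillen–Suslin theorem is proved here. -/
def ReducesToUnit (φ : C →+* D) (v : ι → D) : Prop :=
  ∀ i, ∃ u, IsUnit u ∧ RowEquiv φ v (Pi.single i u)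

namespace ReducesToUnit

variable {φ : C →+* D} {v w : ι → D}

theorem of_isUnit (hφ : Function.Surjective φ) {j : ι} (hj : IsUnit (v j)) :
    ReducesToUnit φ v := fun i ↦ by
  obtain ⟨s, hs⟩ := hj.exists_right_inv
  choose g hg using hφ
  let b : ι → C := Function.update (fun t ↦ -g (s * v t)) j 0
  have hv : φ ∘ g ∘ v = v := funext fun t ↦ hg _
  have hclear : φ ∘ (g ∘ v + ((Pi.single j 1 : ι → C) ⬝ᵥ (g ∘ v)) • b) = Pi.single j (v j) := by
    ext t
    by_cases htj : t = j
    · subst htj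
      simp [b, hg]
    · simp only [single_dotProduct, Function.comp_apply, one_mul, Pi.add_apply, Pi.smul_apply,
        Function.update_of_ne htj, smul_eq_mul, mul_neg, map_add, hg, map_neg, map_mul,
        Pi.single_eq_of_ne htj, b]
      linear_combination (-v t) * hs
  have hperm : (Pi.single j (v j) : ι → D) ∘ Equiv.swap i j = Pi.single i (v j) := by
    ext t
    simp only [Function.comp_apply, Pi.single_apply, Equiv.swap_apply_eq_iff,
      Equiv.swap_apply_right]
  have h := (RowEquiv.transvection φ (g ∘ v) (a := Pi.single j 1) (b := b) (by simp [b])).trans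
    (RowEquiv.comp_perm φ (Equiv.swap i j) _)
  refine ⟨v j, hj, ?_⟩
  rwa [hv, ← Function.comp_assoc, hclear, hperm] at h

theorem of_rowEquiv (h : RowEquiv φ v w) (hw : ReducesToUnit φ w) : ReducesToUnit φ v := fun i ↦ by
  obtain ⟨u, hu, hwu⟩ := hw i
  exact ⟨u, hu, h.trans hwu⟩

theorem of_smul {a : D} (ha : IsUnit a) (h : ReducesToUnit φ (a • v)) : ReducesToUnit φ v :=
  fun i ↦ by
  obtain ⟨b, hb⟩ := ha.exists_left_inv
  obtain ⟨u, hu, hvu⟩ := h i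
  refine ⟨b * u, (IsUnit.of_mul_eq_one a hb).mul hu, ?_⟩
  simpa only [smul_smul, hb, one_smul, ← Pi.single_smul, smul_eq_mul] using hvu.smul b

theorem map {C' D' : Type*} [CommRing C'] [CommRing D'] {φ' : C' →+* D'} (f : C →+* C')
    (g : D →+* D') (hfg : φ'.comp f = g.comp φ) (h : ReducesToUnit φ v) :
    ReducesToUnit φ' (g ∘ v) := fun i ↦ by
  obtain ⟨u, hu, hvu⟩ := h i
  refine ⟨g u, hu.map g, ?_⟩
  have hsingle : g ∘ Pi.single i u = Pi.single i (g u) :=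
    funext fun t ↦ Pi.apply_single (fun _ ↦ g) (fun _ ↦ map_zero g) i u t
  exact hsingle ▸ hvu.map f g hfg

open Polynomial in
theorem of_monic (hφ : Function.Surjective φ)
    (h : ∀ w : ι → D, IsUnimodularRow w → ReducesToUnit φ w) {v : ι → D[X]}
    (hv : IsUnimodularRow v) {j : ι} (hj : (v j).Monic) : ReducesToUnit (mapRingHom φ) v := by
  have hφX : Function.Surjective (mapRingHom φ) := Polynomial.map_surjective φ hφ
  rcases subsingleton_or_nontrivial ι with _ | _
  · have : Unique ι := uniqueOfSubsingleton j
    obtain ⟨w, hw⟩ := hv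
    refine of_isUnit hφX (j := j) (IsUnit.of_mul_eq_one_right (w j) ?_)
    simpa [dotProduct, Subsingleton.elim j default] using hw
  obtain ⟨i, hji⟩ := exists_ne j
  have hlift (t : ι) : ∃ q : C[X], mapRingHom φ q = v t ∧ (t = j → q.Monic) := by
    by_cases htj : t = j
    · subst htj
      obtain ⟨q, hq, -, hqm⟩ :=
        lifts_and_natDegree_eq_and_monic ((mem_lifts _).mpr (hφX (v t))) hj
      exact ⟨q, hq, fun _ ↦ hqm⟩
    · exact (hφX (v t)).imp fun q hq ↦ ⟨hq, fun h ↦ absurd h htj⟩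
  choose f hf hfm using hlift
  obtain rfl : mapRingHom φ ∘ f = v := funext hf
  have hconst : IsUnimodularRow (fun t ↦ φ ((f t).coeff 0)) := by
    simpa [Function.comp_def] using hv.map constantCoeff
  exact of_rowEquiv (RowEquiv.map_coeff_zero hφ hv hji.symm (hfm j rfl))
    ((h _ hconst).map Polynomial.C Polynomial.C (by ext; simp))

end ReducesToUnit

open MvPolynomial in
theorem isUnit_mvPolynomial_of_ne_zero {σ k : Type*} [IsEmpty σ] [Field k] {f : MvPolynomial σ k}
    (hf : f ≠ 0) : IsUnit f := by
  rw [← MulEquiv.isUnit_map (isEmptyRingEquiv k σ), isUnit_iff_ne_zero]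
  exact (map_ne_zero_iff _ (isEmptyRingEquiv k σ).injective).mpr hf

open MvPolynomial in
theorem IsUnimodularRow.reducesToUnit {R L : Type*} [CommRing R] [Field L] {φ : R →+* L}
    (hφ : Function.Surjective φ) {m : ℕ} {v : ι → MvPolynomial (Fin m) L}
    (hv : IsUnimodularRow v) : ReducesToUnit (MvPolynomial.map (σ := Fin m) φ) v := by
  induction m with
  | zero =>
    obtain ⟨j, hj⟩ := hv.exists_ne_zero
    exact .of_isUnit (map_surjective φ hφ) (isUnit_mvPolynomial_of_ne_zero hj)
  | succ m ih =>
    obtain ⟨j, hj⟩ := hv.exists_ne_zero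
    obtain ⟨N, a, ha, hmonic⟩ := exists_monic_shearEquiv_C_mul hj
    have hCa : IsUnit (C a : MvPolynomial (Fin (m + 1)) L) := (isUnit_iff_ne_zero.mpr ha).map C
    have hrow := (hv.smul hCa).map (shearEquiv L m N).toRingEquiv.toRingHom
    have hpoly := ReducesToUnit.of_monic (map_surjective φ hφ) (fun w hw ↦ ih hw) hrow hmonic
    have hback := hpoly.map (φ' := MvPolynomial.map (σ := Fin (m + 1)) φ)
      ((shearEquiv R m N).symm : _ →+* _) ((shearEquiv L m N).symm : _ →+* _) (by
        refine RingHom.ext fun x ↦ ?_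
        obtain ⟨x, rfl⟩ := (shearEquiv R m N).surjective x
        simp [map_shearEquiv])
    refine ReducesToUnit.of_smul hCa ?_
    simpa [← Function.comp_assoc, Function.comp_def, Pi.smul_def] using hback

end ReducesToUnit

section HasFreeResolution

universe u

/-- The module `M` has a resolution of length at most `n` by finite free modules. It is encoded by
iterated kernels, so that no chain complexes are needed. -/
def HasFreeResolution (R : Type u) [CommRing R] :
    ℕ → ∀ (M : Type u) [AddCommGroup M] [Module R M], Prop
  | 0, M, _, _ => Module.Finite R M ∧ Module.Free R M
  | n + 1, M, _, _ => ∃ (G : Type u) (_ : AddCommGroup G) (_ : Module R G) (f : G →ₗ[R] M),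
      Module.Finite R G ∧ Module.Free R G ∧ Function.Surjective f ∧
        HasFreeResolution R n (LinearMap.ker f)

namespace HasFreeResolution

section Exact

variable {R : Type u} [CommRing R] {A B C M N : Type u} [AddCommGroup A] [Module R A]
  [AddCommGroup B] [Module R B] [AddCommGroup C] [Module R C] [AddCommGroup M] [Module R M]
  [AddCommGroup N] [Module R N] {n : ℕ}

theorem of_equiv (e : M ≃ₗ[R] N) (h : HasFreeResolution R n M) : HasFreeResolution R n N := by
  cases n with
  | zero =>
    obtain ⟨_, _⟩ := h
    exact ⟨Module.Finite.equiv e, Module.Free.of_equiv e⟩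
  | succ n =>
    obtain ⟨G, _, _, f, hfin, hfree, hf, hker⟩ := h
    exact ⟨G, _, _, e.toLinearMap ∘ₗ f, hfin, hfree, e.surjective.comp hf,
      by rwa [LinearEquiv.ker_comp]⟩

theorem of_exact_of_free {G : Type u} [AddCommGroup G] [Module R G] [Module.Finite R G]
    [Module.Free R G] {i : A →ₗ[R] G} {f : G →ₗ[R] M} (hi : Function.Injective i)
    (hif : Function.Exact i f) (hf : Function.Surjective f) (hA : HasFreeResolution R n A) :
    HasFreeResolution R (n + 1) M := by
  refine ⟨G, _, _, f, inferInstance, inferInstance, hf, ?_⟩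
  rw [hif.linearMap_ker_eq]
  exact hA.of_equiv (LinearEquiv.ofInjective i hi)

theorem of_subsingleton [Subsingleton M] : HasFreeResolution R n M := by
  induction n generalizing M with
  | zero => exact ⟨inferInstance, inferInstance⟩
  | succ n ih =>
    exact ⟨PUnit, _, _, 0, inferInstance, inferInstance, Function.surjective_to_subsingleton _, ih⟩

theorem succ (h : HasFreeResolution R n M) : HasFreeResolution R (n + 1) M := by
  induction n generalizing M with
  | zero =>
    obtain ⟨hfin, hfree⟩ := h
    refine ⟨M, _, _, LinearMap.id, hfin, hfree, Function.surjective_id, ?_⟩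
    rw [LinearMap.ker_id]
    exact of_subsingleton
  | succ n ih =>
    obtain ⟨G, _, _, f, hfin, hfree, hf, hker⟩ := h
    exact ⟨G, _, _, f, hfin, hfree, hf, ih hker⟩

theorem mono {m : ℕ} (hnm : n ≤ m) (h : HasFreeResolution R n M) : HasFreeResolution R m M := by
  induction hnm with
  | refl => exact h
  | step _ ih => exact ih.succ

theorem exists_exact_ker_coprod {G H : Type*} [AddCommGroup G] [Module R G] [AddCommGroup H]
    [Module R H] {i : A →ₗ[R] B} {p : B →ₗ[R] C} (hi : Function.Injective i)
    (hip : Function.Exact i p) {f : G →ₗ[R] A} (hf : Function.Surjective f) {s : H →ₗ[R] B}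
    (hs : Function.Surjective (p ∘ₗ s)) :
    Function.Surjective ((i ∘ₗ f).coprod s) ∧
      ∃ (j : LinearMap.ker f →ₗ[R] LinearMap.ker ((i ∘ₗ f).coprod s))
        (q : LinearMap.ker ((i ∘ₗ f).coprod s) →ₗ[R] LinearMap.ker (p ∘ₗ s)),
        Function.Injective j ∧ Function.Exact j q ∧ Function.Surjective q := by
  have hpi (x : A) : p (i x) = 0 := hip.apply_apply_eq_zero x
  let j : LinearMap.ker f →ₗ[R] LinearMap.ker ((i ∘ₗ f).coprod s) :=
    (LinearMap.inl R G H).restrict fun x hx ↦ by simp_all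
  let q : LinearMap.ker ((i ∘ₗ f).coprod s) →ₗ[R] LinearMap.ker (p ∘ₗ s) :=
    (LinearMap.snd R G H).restrict fun x hx ↦ by
      simpa [hpi] using congr(p $(LinearMap.mem_ker.mp hx))
  refine ⟨fun b ↦ ?_, j, q, fun x y hxy ↦ Subtype.ext congr(($hxy).1.1), ?_, ?_⟩
  · obtain ⟨y, hy⟩ := hs (p b)
    obtain ⟨a, ha⟩ := (hip (b - s y)).mp (by rw [map_sub, ← hy, LinearMap.comp_apply, sub_self])
    obtain ⟨x, rfl⟩ := hf a
    exact ⟨(x, y), by simp [ha]⟩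
  · rintro ⟨⟨x, y⟩, hxy⟩
    refine ⟨fun h ↦ ?_, fun ⟨z, hz⟩ ↦ hz ▸ rfl⟩
    obtain rfl : y = 0 := congr(($h).1)
    exact ⟨⟨x, hi (by simpa using hxy)⟩, rfl⟩
  · rintro ⟨y, hy⟩
    obtain ⟨a, ha⟩ := (hip (s y)).mp hy
    obtain ⟨x, hx⟩ := hf (-a)
    exact ⟨⟨(x, y), by simp [hx, ha]⟩, rfl⟩

theorem of_exact {i : A →ₗ[R] B} {p : B →ₗ[R] C} (hi : Function.Injective i)
    (hip : Function.Exact i p) (hp : Function.Surjective p) (hA : HasFreeResolution R n A)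
    (hC : HasFreeResolution R n C) : HasFreeResolution R n B := by
  induction n generalizing A B C with
  | zero =>
    obtain ⟨_, _⟩ := hA
    obtain ⟨_, _⟩ := hC
    obtain ⟨s, hs⟩ := Module.projective_lifting_property p LinearMap.id hp
    have e := lequivProdOfRightSplitExact hi hip.linearMap_ker_eq.symm hs
    exact ⟨Module.Finite.equiv e, Module.Free.of_equiv e⟩
  | succ n ih =>
    obtain ⟨G, _, _, f, _, _, hf, hkerA⟩ := hA
    obtain ⟨H, _, _, g, _, _, hg, hkerC⟩ := hC
    obtain ⟨s, rfl⟩ := Module.projective_lifting_property p g hp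
    obtain ⟨hsurj, j, q, hj, hjq, hq⟩ := exists_exact_ker_coprod hi hip hf hg
    exact ⟨G × H, _, _, _, inferInstance, inferInstance, hsurj, ih hj hjq hq hkerA hkerC⟩

theorem of_exact_quotient {i : A →ₗ[R] B} {p : B →ₗ[R] C} (hi : Function.Injective i)
    (hip : Function.Exact i p) (hp : Function.Surjective p) (hA : HasFreeResolution R n A)
    (hB : HasFreeResolution R n B) : HasFreeResolution R (n + 1) C := by
  obtain ⟨G, _, _, f, hfin, hfree, hf, hker⟩ := hB.succ
  refine ⟨G, _, _, p ∘ₗ f, hfin, hfree, hp.comp hf, ?_⟩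
  have hkerp : HasFreeResolution R n (LinearMap.ker p) := by
    rw [hip.linearMap_ker_eq]
    exact hA.of_equiv (LinearEquiv.ofInjective i hi)
  let q : LinearMap.ker (p ∘ₗ f) →ₗ[R] LinearMap.ker p := f.restrict fun _ hx ↦ hx
  refine of_exact (p := q) (Submodule.inclusion_injective (LinearMap.ker_le_ker_comp f p)) ?_ ?_
    hker hkerp
  · rintro ⟨x, hx⟩
    exact ⟨fun h ↦ ⟨⟨x, congr(($h).1)⟩, rfl⟩, fun ⟨y, hy⟩ ↦ hy ▸ Subtype.ext y.2⟩
  · rintro ⟨b, hb⟩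
    obtain ⟨x, rfl⟩ := hf b
    exact ⟨⟨x, hb⟩, rfl⟩

open TensorProduct in
theorem baseChange (S : Type u) [CommRing S] [Algebra R S] [Module.Flat R S]
    (h : HasFreeResolution R n M) : HasFreeResolution S n (S ⊗[R] M) := by
  induction n generalizing M with
  | zero =>
    obtain ⟨_, _⟩ := h
    exact ⟨inferInstance, inferInstance⟩
  | succ n ih =>
    obtain ⟨G, _, _, f, _, _, hf, hker⟩ := h
    exact of_exact_of_free (i := (LinearMap.ker f).subtype.baseChange S) (f := f.baseChange S)
      (Module.Flat.lTensor_preserves_injective_linearMap _ Subtype.val_injective)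
      (lTensor_exact S (LinearMap.exact_subtype_ker_map f) hf)
      (LinearMap.lTensor_surjective S hf) (ih hker)

theorem isStablyFree [Module.Projective R M] (h : HasFreeResolution R n M) :
    Module.IsStablyFree R M := by
  induction n generalizing M with
  | zero =>
    obtain ⟨_, _⟩ := h
    infer_instance
  | succ n ih =>
    obtain ⟨G, _, _, f, _, _, hf, hker⟩ := h
    obtain ⟨s, hs⟩ := Module.projective_lifting_property f LinearMap.id hf
    let e := lequivProdOfRightSplitExact (LinearMap.ker f).injective_subtype
      (Submodule.range_subtype _) hs
    have : Module.Finite R (LinearMap.ker f) :=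
      Module.Finite.of_surjective (LinearMap.fst R _ M ∘ₗ e.symm.toLinearMap)
        (Prod.fst_surjective.comp e.symm.surjective)
    have : Module.Projective R (LinearMap.ker f × M) := Module.Projective.of_equiv e.symm
    have : Module.Projective R (LinearMap.ker f) :=
      Module.Projective.of_split (LinearMap.inl R _ M) (LinearMap.fst R _ M) (by ext; simp)
    have := ih hker
    obtain ⟨F, _, _, _, _, _⟩ := Module.IsStablyFree.exist_free_prod R (LinearMap.ker f)
    have : Module.Free R (M × LinearMap.ker f × F) := Module.Free.of_equiv <|
      ((e.symm.trans (LinearEquiv.prodComm R _ M)).prodCongr (LinearEquiv.refl R F)).trans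
        (LinearEquiv.prodAssoc R M _ F)
    exact Module.IsStablyFree.of_free_prod R M (LinearMap.ker f × F)

end Exact

section Characteristic

open TensorProduct Polynomial

variable {R S : Type u} [CommRing R] [CommRing S] [Algebra R S] {M : Type u} [AddCommGroup M]
  [Module R M] [Module S M] [IsScalarTower R S M] {t : S} {b : Module.Basis ℕ R S}

/-- The first map of the characteristic sequence `0 → S ⊗ M → S ⊗ M → M → 0` of an `S`-module `M`,
which is exact when the powers of `t` are a basis of `S` over `R`. -/
noncomputable def characteristicMap (R : Type u) [CommRing R] [Algebra R S] (M : Type u)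
    [AddCommGroup M] [Module R M] [Module S M] [IsScalarTower R S M] (t : S) :
    S ⊗[R] M →ₗ[S] S ⊗[R] M :=
  t • LinearMap.id - ((LinearMap.lsmul S M t).restrictScalars R).baseChange S

theorem characteristicMap_tmul (s : S) (x : M) :
    characteristicMap R M t (s ⊗ₜ x) = (t * s) ⊗ₜ x - s ⊗ₜ (t • x) := by
  simp [characteristicMap, TensorProduct.smul_tmul']

theorem repr_mul_succ (hb : ∀ i, b i = t ^ i) (s : S) (i : ℕ) :
    b.repr (t * s) (i + 1) = b.repr s i := by
  suffices h : b.coord (i + 1) ∘ₗ LinearMap.mulLeft R t = b.coord i from congr($h s)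
  refine b.ext fun j ↦ ?_
  have hmul : t * b j = b (j + 1) := by rw [hb, hb, pow_succ']
  simp [hmul, Finsupp.single_apply]

theorem equivFinsupp_characteristicMap_succ (hb : ∀ i, b i = t ^ i) (x : S ⊗[R] M) (i : ℕ) :
    equivFinsuppOfBasisLeft b (characteristicMap R M t x) (i + 1) =
      equivFinsuppOfBasisLeft b x i - t • equivFinsuppOfBasisLeft b x (i + 1) := by
  induction x with
  | zero => simp
  | tmul s x =>
    rw [characteristicMap_tmul, map_sub, Finsupp.sub_apply]
    simp only [equivFinsuppOfBasisLeft_apply_tmul_apply, repr_mul_succ hb, smul_comm t]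
  | add x y hx hy =>
    simp only [map_add, Finsupp.add_apply, hx, hy, smul_add]
    abel

theorem characteristicMap_injective (hb : ∀ i, b i = t ^ i) :
    Function.Injective (characteristicMap R M t) := by
  rw [injective_iff_map_eq_zero]
  intro x hx
  set c := equivFinsuppOfBasisLeft b x with hc
  have hstep (i : ℕ) : c i = t • c (i + 1) := by
    have h := equivFinsupp_characteristicMap_succ hb x i
    rwa [hx, map_zero, Finsupp.zero_apply, eq_comm, sub_eq_zero] at h
  have hpow (i j : ℕ) : c i = t ^ j • c (i + j) := by
    induction j with
    | zero => simp
    | succ j ih => rw [ih, hstep (i + j), smul_smul, ← pow_succ, add_assoc]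
  obtain ⟨d, hd⟩ := c.support.exists_nat_subset_range
  have hzero (i : ℕ) : c (i + d) = 0 := Finsupp.notMem_support_iff.mp fun hmem ↦
    (Nat.le_add_left d i).not_gt (Finset.mem_range.mp (hd hmem))
  rw [← (equivFinsuppOfBasisLeft b).map_eq_zero_iff, ← hc]
  exact Finsupp.ext fun i ↦ by rw [hpow i d, hzero, smul_zero, Finsupp.zero_apply]

theorem exact_characteristicMap (hb : ∀ i, b i = t ^ i) :
    Function.Exact (characteristicMap R M t) ((LinearMap.id : M →ₗ[R] M).liftBaseChange S) := by
  set μ := (LinearMap.id : M →ₗ[R] M).liftBaseChange S with hμ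
  set Q := LinearMap.range (characteristicMap R M t)
  have hmk : (Q.mkQ.restrictScalars R) =
      Q.mkQ.restrictScalars R ∘ₗ TensorProduct.mk R S M 1 ∘ₗ μ.restrictScalars R := by
    refine TensorProduct.ext (b.ext fun i ↦ ?_)
    rw [hb]
    induction i with
    | zero => ext x; simp [hμ]
    | succ i ih =>
      ext x
      have hrel : Q.mkQ ((t ^ (i + 1)) ⊗ₜ x) = Q.mkQ ((t ^ i) ⊗ₜ (t • x)) := by
        rw [← sub_eq_zero, ← map_sub, pow_succ', ← characteristicMap_tmul]
        exact (Submodule.Quotient.mk_eq_zero _).mpr (LinearMap.mem_range_self _ _)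
      have h := hrel.trans congr($ih (t • x))
      simpa [hμ, pow_succ, smul_smul] using h
  intro x
  refine ⟨fun hx ↦ ?_, ?_⟩
  · exact (Submodule.Quotient.mk_eq_zero Q).mp (by simpa [hx] using congr($hmk x))
  · rintro ⟨y, rfl⟩
    induction y with
    | zero => simp
    | tmul s x => simp [characteristicMap_tmul, hμ, mul_comm t, mul_smul]
    | add x y hx hy => rw [map_add, map_add, hx, hy, add_zero]

theorem of_algEquiv_polynomial (e : R[X] ≃ₐ[R] S) {n : ℕ} (h : HasFreeResolution R n M) :
    HasFreeResolution S (n + 1) M := by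
  let b := (Polynomial.basisMonomials R).map e.toLinearEquiv
  have hb (i : ℕ) : b i = e X ^ i := by simp [b, ← X_pow_eq_monomial]
  have : Module.Free R S := Module.Free.of_basis b
  refine of_exact_quotient (characteristicMap_injective hb) (exact_characteristicMap hb)
    (fun x ↦ ⟨1 ⊗ₜ x, by simp⟩) (h.baseChange S) (h.baseChange S)

end Characteristic

end HasFreeResolution

section Syzygy

open Polynomial

theorem finite_quotient_of_monic_mem {R S : Type*} [CommRing R] [CommRing S] [Algebra R S]
    (e : R[X] ≃ₐ[R] S) {g : R[X]} (hg : g.Monic) {I : Ideal S} (hgI : e g ∈ I) :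
    Module.Finite R (S ⧸ I) := by
  have : Module.Finite R (R[X] ⧸ Ideal.span {g}) := hg.finite_quotient
  have hle : Ideal.span {g} ≤ I.comap (e : R[X] →ₐ[R] S) :=
    (Ideal.span_singleton_le_iff_mem _).mpr hgI
  exact Module.Finite.of_surjective (Ideal.quotientMapₐ I (e : R[X] →ₐ[R] S) hle).toLinearMap
    (Ideal.quotientMap_surjective (H := hle) e.surjective)

theorem exists_hasFreeResolution_of_quotient_prime {S : Type u} [CommRing S] [IsNoetherianRing S]
    (h : ∀ p : Ideal S, p.IsPrime → p ≠ ⊥ → ∃ n, HasFreeResolution S n (S ⧸ p))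
    (M : Type u) [AddCommGroup M] [Module S M] (hM : Module.Finite S M) :
    ∃ n, HasFreeResolution S n M := by
  induction hM using IsNoetherianRing.induction_on_isQuotientEquivQuotientPrime S with
  | subsingleton N => exact ⟨0, .of_subsingleton⟩
  | quotient N p e =>
    by_cases hp : p.1 = ⊥
    · have e' : (S ⧸ p.1) ≃ₗ[S] S := Submodule.quotEquivOfEqBot p.1 hp
      exact ⟨0, .of_equiv (e.trans e').symm ⟨inferInstance, inferInstance⟩⟩
    · obtain ⟨n, hn⟩ := h p.1 p.2 hp
      exact ⟨n, hn.of_equiv e.symm⟩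
  | exact A B C f g hf hg hfg hA hC =>
    obtain ⟨a, ha⟩ := hA
    obtain ⟨c, hc⟩ := hC
    exact ⟨max a c, .of_exact hf hfg hg (ha.mono (le_max_left _ _)) (hc.mono (le_max_right _ _))⟩

theorem exists_hasFreeResolution_mvPolynomial (k : Type u) [Field k] (m : ℕ) (M : Type u)
    [AddCommGroup M] [Module (MvPolynomial (Fin m) k) M]
    (hM : Module.Finite (MvPolynomial (Fin m) k) M) :
    ∃ n, HasFreeResolution (MvPolynomial (Fin m) k) n M := by
  induction m generalizing M with
  | zero =>
    refine exists_hasFreeResolution_of_quotient_prime (fun p hp hp0 ↦ ?_) M hM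
    obtain ⟨f, hf, hf0⟩ := Submodule.exists_mem_ne_zero_of_ne_bot hp0
    exact absurd (p.eq_top_of_isUnit_mem hf (isUnit_mvPolynomial_of_ne_zero hf0)) hp.ne_top
  | succ m ih =>
    refine exists_hasFreeResolution_of_quotient_prime (fun p _ hp0 ↦ ?_) M hM
    obtain ⟨f, hf, hf0⟩ := Submodule.exists_mem_ne_zero_of_ne_bot hp0
    obtain ⟨N, a, -, hmonic⟩ := exists_monic_shearEquiv_C_mul hf0
    let e := (shearEquiv k m N).symm
    let _ : Algebra (MvPolynomial (Fin m) k) (MvPolynomial (Fin (m + 1)) k) :=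
      (e.toRingEquiv.toRingHom.comp Polynomial.C).toAlgebra
    let e' : (MvPolynomial (Fin m) k)[X] ≃ₐ[MvPolynomial (Fin m) k]
        MvPolynomial (Fin (m + 1)) k := AlgEquiv.ofRingEquiv (f := e.toRingEquiv) fun _ ↦ rfl
    have hmem : e' (shearEquiv k m N (MvPolynomial.C a * f)) ∈ p := by
      change e (shearEquiv k m N (MvPolynomial.C a * f)) ∈ p
      rw [AlgEquiv.symm_apply_apply]
      exact p.mul_mem_left _ hf
    obtain ⟨n, hn⟩ := ih _ (finite_quotient_of_monic_mem e' hmonic hmem)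
    exact ⟨n + 1, hn.of_algEquiv_polynomial e'⟩

end Syzygy

end HasFreeResolution

section QuillenSuslin

universe u

open Matrix

theorem free_of_apply_eq_single {R P ι : Type*} [CommRing R] [AddCommGroup P] [Module R P]
    [Finite ι] [DecidableEq ι] (h : (P × R) ≃ₗ[R] (ι → R)) {i : ι} {u : R} (hu : IsUnit u)
    (hi : h (0, 1) = Pi.single i u) : Module.Free R P := by
  have hsingle (s : R) : h (0, s) = Pi.single i (s * u) := by
    rw [show ((0 : P), s) = s • ((0 : P), (1 : R)) by simp, map_smul, hi, ← Pi.single_smul,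
      smul_eq_mul]
  let forget : (P × R) →ₗ[R] ({j // j ≠ i} → R) :=
    LinearMap.funLeft R R Subtype.val ∘ₗ h.toLinearMap
  have hforget : Function.Surjective forget :=
    (LinearMap.funLeft_surjective_of_injective R R _ Subtype.val_injective).comp h.surjective
  have hker : LinearMap.ker forget = LinearMap.ker (LinearMap.fst R P R) := by
    ext ⟨x, r⟩
    constructor
    · intro hx
      obtain ⟨s, hs⟩ := hu.exists_left_inv
      have heq : h (x, r) = h (0, h (x, r) i * s) := by
        rw [hsingle, mul_assoc, hs, mul_one]
        ext j
        by_cases hji : j = i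
        · rw [hji, Pi.single_eq_same]
        · rw [Pi.single_eq_of_ne hji]
          exact congr($hx ⟨j, hji⟩)
      exact congr(($(h.injective heq)).1)
    · rintro (rfl : x = 0)
      ext j
      exact congr($(hsingle r) j).trans (Pi.single_eq_of_ne j.2 _)
  exact Module.Free.of_equiv <| (forget.quotKerEquivOfSurjective hforget).symm.trans <|
    (Submodule.quotEquivOfEq _ _ hker).trans
      ((LinearMap.fst R P R).quotKerEquivOfSurjective LinearMap.fst_surjective)

theorem free_of_reducesToUnit {R P ι : Type*} [CommRing R] [AddCommGroup P] [Module R P]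
    [Fintype ι] [DecidableEq ι] (e : (P × R) ≃ₗ[R] (ι → R)) (i : ι)
    (h : ReducesToUnit (RingHom.id R) (e (0, 1))) : Module.Free R P := by
  obtain ⟨u, hu, U, hU⟩ := h i
  let t : (ι → R) ≃ₗ[R] (ι → R) :=
    Matrix.toLinearEquivRight'OfInv (M := (↑U⁻¹ : Matrix ι ι R)) (M' := (U : Matrix ι ι R))
      (by simp) (by simp)
  exact free_of_apply_eq_single (e.trans t) hu hU

theorem free_mvPolynomial_of_free_prod_self {k P : Type*} [Field k] {m : ℕ} [AddCommGroup P]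
    [Module (MvPolynomial (Fin m) k) P] [Module.Finite (MvPolynomial (Fin m) k) P]
    [Module.Free (MvPolynomial (Fin m) k) (P × MvPolynomial (Fin m) k)] :
    Module.Free (MvPolynomial (Fin m) k) P := by
  let R := MvPolynomial (Fin m) k
  let e := (Module.finBasis R (P × R)).equivFun
  have hrow : IsUnimodularRow (e (0, 1)) :=
    .of_linearMap (LinearMap.snd R P R ∘ₗ e.symm.toLinearMap) (by simp)
  obtain ⟨i, -⟩ := hrow.exists_ne_zero
  have h := hrow.reducesToUnit (φ := RingHom.id k) Function.surjective_id
  have hid : MvPolynomial.map (σ := Fin m) (RingHom.id k) = RingHom.id _ :=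
    RingHom.ext MvPolynomial.map_id
  rw [hid] at h
  exact free_of_reducesToUnit e i h

theorem free_mvPolynomial_of_projective {k : Type u} [Field k] {m : ℕ} (P : Type u) [AddCommGroup P]
    [Module (MvPolynomial (Fin m) k) P] [Module.Finite (MvPolynomial (Fin m) k) P]
    [Module.Projective (MvPolynomial (Fin m) k) P] :
    Module.Free (MvPolynomial (Fin m) k) P := by
  let R := MvPolynomial (Fin m) k
  obtain ⟨n, hn⟩ := exists_hasFreeResolution_mvPolynomial k m P inferInstance
  have := hn.isStablyFree
  obtain ⟨F, _, _, _, _, hfree⟩ := Module.IsStablyFree.exist_free_prod R P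
  have cancel (a : ℕ) (h : Module.Free R (P × (Fin a → R))) : Module.Free R P := by
    induction a with
    | zero =>
      exact Module.Free.of_equiv (LinearEquiv.prodUnique (R := R) (M := P) (M₂ := Fin 0 → R))
    | succ a ih =>
      have : Module.Free R ((P × (Fin a → R)) × R) := Module.Free.of_equiv <|
        (((LinearEquiv.refl R P).prodCongr (Fin.consLinearEquiv R fun _ ↦ R)).symm.trans <|
          (LinearEquiv.refl R P).prodCongr (LinearEquiv.prodComm R R (Fin a → R))).trans
          (LinearEquiv.prodAssoc R P (Fin a → R) R).symm
      exact ih free_mvPolynomial_of_free_prod_self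
  exact cancel _ (Module.Free.of_equiv
    ((LinearEquiv.refl R P).prodCongr (Module.finBasis R F).equivFun))

end QuillenSuslin

section Minors

open Matrix nonZeroDivisors

theorem rank_map_algebraMap_of_isFractionRing {R m n : Type*} (K : Type*) [CommRing R] [IsDomain R]
    [Field K] [Algebra R K] [IsFractionRing R K] [Finite m] [Fintype n] (M : Matrix m n R) :
    (M.map (algebraMap R K)).rank = M.rank := by
  let f : (m → R) →ₗ[R] (m → K) := .pi fun i ↦ Algebra.linearMap R K ∘ₗ .proj i
  rw [rank_eq_finrank_span_cols, rank_eq_finrank_span_cols,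
    ← IsLocalizedModule.finrank_eq R⁰
      ((Submodule.span R (Set.range M.col)).toLocalized' K R⁰ f) le_rfl,
    ← IsLocalization.finrank_eq K R⁰ le_rfl, Submodule.localized'_span, ← Set.range_comp]
  rfl

theorem rank_eq_of_vecMul_eq_zero_imp {R m n : Type*} [CommRing R] [IsDomain R] [Fintype m]
    [Fintype n] {M : Matrix m n R} (hM : ∀ v, v ᵥ* M = 0 → v = 0) : M.rank = Fintype.card m := by
  let K := FractionRing R
  have hrow : LinearIndependent R M.row :=
    Fintype.linearIndependent_iff.2 fun v hv ↦ congr_fun (hM v (by rw [vecMul_eq_sum]; exact hv))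
  have hf : LinearMap.ker ((Algebra.linearMap R K).compLeft n) = ⊥ :=
    LinearMap.ker_eq_bot.2 fun _ _ h ↦ funext fun j ↦
      IsFractionRing.injective R K (congr_fun h j)
  have hrowK : LinearIndependent K (M.map (algebraMap R K)).row :=
    (LinearIndependent.iff_fractionRing R K).1 (hrow.map' _ hf)
  rw [← rank_map_algebraMap_of_isFractionRing K, hrowK.rank_matrix]

theorem exists_strictMono_comp_perm {r : ℕ} {α : Type*} [LinearOrder α] {f : Fin r → α}
    (hf : Function.Injective f) : ∃ σ : Equiv.Perm (Fin r), StrictMono (f ∘ σ) :=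
  ⟨Tuple.sort f, (Tuple.monotone_sort f).strictMono_of_injective
    (hf.comp (Tuple.sort f).injective)⟩

theorem exists_strictMono_linearIndependent_row {K n : Type*} [Field K] [Fintype n] {l : ℕ}
    (M : Matrix (Fin l) n K) :
    ∃ f : Fin M.rank → Fin l, StrictMono f ∧ LinearIndependent K (M.submatrix f id).row := by
  rw [rank_eq_finrank_span_row]
  obtain ⟨v, hv, -, hli⟩ := Submodule.exists_fun_fin_finrank_span_eq K (Set.range M.row)
  choose f hf using hv
  have hinj : Function.Injective f := fun a b h ↦ hli.injective (by rw [← hf, ← hf, h])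
  obtain ⟨σ, hσ⟩ := exists_strictMono_comp_perm hinj
  have hrow : (M.submatrix (f ∘ σ) id).row = v ∘ σ := funext fun k ↦ hf (σ k)
  exact ⟨f ∘ σ, hσ, hrow ▸ hli.comp σ σ.injective⟩

theorem exists_strictMono_det_submatrix_ne_zero {R : Type*} [CommRing R] [IsDomain R] {l c : ℕ}
    (M : Matrix (Fin l) (Fin c) R) :
    ∃ (f : Fin M.rank → Fin l) (g : Fin M.rank → Fin c), StrictMono f ∧ StrictMono g ∧
      (M.submatrix f g).det ≠ 0 := by
  let K := FractionRing R
  let N := M.map (algebraMap R K)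
  rw [← rank_map_algebraMap_of_isFractionRing K]
  obtain ⟨f, hf, hrows⟩ := exists_strictMono_linearIndependent_row N
  have hrank : (N.submatrix f id)ᵀ.rank = N.rank := by
    rw [rank_transpose, hrows.rank_matrix, Fintype.card_fin]
  have hcols := exists_strictMono_linearIndependent_row (N.submatrix f id)ᵀ
  rw [hrank] at hcols
  obtain ⟨g, hg, hcols⟩ := hcols
  refine ⟨f, g, hf, hg, fun hdet ↦ ?_⟩
  have hunit : IsUnit (N.submatrix f g)ᵀ := linearIndependent_rows_iff_isUnit.1 hcols
  have hzero : (N.submatrix f g)ᵀ.det = 0 := by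
    rw [det_transpose, submatrix_map, ← RingHom.mapMatrix_apply, ← RingHom.map_det, hdet, map_zero]
  exact not_isUnit_zero (hzero ▸ (isUnit_iff_isUnit_det _).1 hunit)

theorem dvd_det_submatrix_of_forall_mem_minorsSet {R : Type*} [CommRing R] {l c r : ℕ}
    {M : Matrix (Fin l) (Fin c) R} {d : R} (hd : ∀ a ∈ minorsSet r M, d ∣ a) (f : Fin r → Fin l)
    {g : Fin r → Fin c} (hg : StrictMono g) : d ∣ (M.submatrix f g).det := by
  by_cases hf : Function.Injective f
  · obtain ⟨σ, hσ⟩ := exists_strictMono_comp_perm hf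
    have h : d ∣ ((M.submatrix f g).submatrix σ id).det := hd _ ⟨f ∘ σ, g, hσ, hg, rfl⟩
    rw [det_permute] at h
    exact (σ.sign.isUnit.map (Int.castRingHom R)).dvd_mul_left.1 h
  · obtain ⟨a, b, hab, hne⟩ := Function.not_injective_iff.1 hf
    rw [det_zero_of_row_eq hne (by ext j; simp [hab])]
    exact dvd_zero d

section Cramer

variable {R m n ρ : Type*} [CommRing R] [Fintype ρ] [DecidableEq ρ]

theorem submatrix_mul_adjugate_submatrix_apply (M : Matrix m n R) (f : ρ → m) (g : ρ → n)
    (i : m) (k : ρ) : (M.submatrix id g * (M.submatrix f g).adjugate) i k =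
      (M.submatrix (Function.update f k i) g).det := by
  have hrow : (M.submatrix f g).updateRow k (fun j ↦ M i (g j)) =
      M.submatrix (Function.update f k i) g := by
    ext a b
    by_cases h : a = k
    · subst h
      simp
    · simp [h]
  rw [← hrow, ← cramer_transpose_apply, cramer_eq_adjugate_mulVec, ← adjugate_transpose,
    mulVec_transpose]
  rfl

theorem exists_eq_mul_submatrix_of_rank_eq {K : Type*} [Field K] [Finite m] [Fintype n]
    {M : Matrix m n K} (hr : M.rank = Fintype.card ρ) {f : ρ → m} {g : ρ → n}
    (hfg : (M.submatrix f g).det ≠ 0) : ∃ X : Matrix m ρ K, M = X * M.submatrix f id := by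
  have hli : LinearIndependent K (M.submatrix f id).row :=
    .of_comp (LinearMap.funLeft K K g)
      (linearIndependent_rows_of_det_ne_zero (A := M.submatrix f g) hfg)
  have hspan : Submodule.span K (Set.range (M.submatrix f id).row) =
      Submodule.span K (Set.range M.row) := by
    refine Submodule.eq_of_le_of_finrank_eq (Submodule.span_mono ?_) ?_
    · rintro _ ⟨k, rfl⟩
      exact ⟨f k, rfl⟩
    · rw [finrank_span_eq_card hli, ← rank_eq_finrank_span_row, hr]
  have hmem (i : m) : M i ∈ Submodule.span K (Set.range (M.submatrix f id).row) :=
    hspan ▸ Submodule.subset_span ⟨i, rfl⟩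
  choose X hX using fun i ↦ (Submodule.mem_span_range_iff_exists_fun K).1 (hmem i)
  refine ⟨of X, ?_⟩
  ext1 i
  rw [mul_apply_eq_vecMul, vecMul_eq_sum]
  exact congr_fun (hX i).symm

theorem det_submatrix_smul_eq [IsDomain R] [Finite m] [Fintype n] {M : Matrix m n R}
    (hr : M.rank = Fintype.card ρ) {f : ρ → m} {g : ρ → n} (hfg : (M.submatrix f g).det ≠ 0) :
    (M.submatrix f g).det • M =
      M.submatrix id g * (M.submatrix f g).adjugate * M.submatrix f id := by
  let K := FractionRing R
  let N := M.map (algebraMap R K)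
  have hdet : (N.submatrix f g).det = algebraMap R K (M.submatrix f g).det := by
    rw [RingHom.map_det, RingHom.mapMatrix_apply, submatrix_map]
  have hne : (N.submatrix f g).det ≠ 0 := by simpa [hdet] using hfg
  obtain ⟨X, hX⟩ := exists_eq_mul_submatrix_of_rank_eq
    ((rank_map_algebraMap_of_isFractionRing K M).trans hr) hne
  have hXg : N.submatrix id g = X * N.submatrix f g :=
    congr(Matrix.submatrix $hX id g)
  have hN : (N.submatrix f g).det • N =
      N.submatrix id g * (N.submatrix f g).adjugate * N.submatrix f id := by
    rw [hXg, Matrix.mul_assoc X, mul_adjugate, Matrix.mul_smul, Matrix.mul_one, Matrix.smul_mul]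
    exact congr((N.submatrix f g).det • $hX)
  apply Matrix.map_injective (IsFractionRing.injective R K)
  have hadj : (N.submatrix f g).adjugate = (M.submatrix f g).adjugate.map (algebraMap R K) :=
    ((algebraMap R K).map_adjugate (M.submatrix f g)).symm
  calc ((M.submatrix f g).det • M).map (algebraMap R K)
    _ = (N.submatrix f g).det • N := by
      rw [hdet]
      ext
      simp [N]
    _ = N.submatrix id g * (N.submatrix f g).adjugate * N.submatrix f id := hN
    _ = (M.submatrix id g * (M.submatrix f g).adjugate * M.submatrix f id).map
        (algebraMap R K) := by rw [hadj, Matrix.map_mul, Matrix.map_mul]; rfl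

end Cramer

end Minors

section LeftKernel

open Matrix

section Projector

variable {R m n : Type*} [CommRing R] [Fintype m] {M : Matrix m n R} {E : Matrix m m R}

/-- Right multiplication of row vectors by `E` is a projection onto the left kernel of `M`. -/
def IsLeftKernelProjector (M : Matrix m n R) (E : Matrix m m R) : Prop :=
  E * M = 0 ∧ ∀ v, v ᵥ* M = 0 → v ᵥ* E = v

theorem IsLeftKernelProjector.conj [DecidableEq m] (h : IsLeftKernelProjector M E)
    {U V : Matrix m m R} (hUV : U * V = 1) : IsLeftKernelProjector (U * M) (U * E * V) := by
  refine ⟨?_, fun v hv ↦ ?_⟩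
  · calc U * E * V * (U * M)
      _ = U * E * (V * U) * M := by simp only [Matrix.mul_assoc]
      _ = 0 := by
        rw [mul_eq_one_comm.1 hUV, Matrix.mul_one, Matrix.mul_assoc, h.1, Matrix.mul_zero]
  · rw [← vecMul_vecMul] at hv
    rw [← vecMul_vecMul, ← vecMul_vecMul, h.2 _ hv, vecMul_vecMul, hUV, vecMul_one]

theorem IsLeftKernelProjector.submatrix_castSucc {s : ℕ} {M : Matrix (Fin (s + 1)) n R}
    {E : Matrix (Fin (s + 1)) (Fin (s + 1)) R} (h : IsLeftKernelProjector M E)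
    (hlast : M (Fin.last s) = 0) :
    IsLeftKernelProjector (M.submatrix Fin.castSucc id)
      (E.submatrix Fin.castSucc Fin.castSucc) := by
  refine ⟨?_, fun v hv ↦ ?_⟩
  · ext i j
    have hij := congr($(h.1) i.castSucc j)
    rw [mul_apply, Fin.sum_univ_castSucc, hlast, Pi.zero_apply, mul_zero, add_zero] at hij
    rw [mul_apply]
    exact hij
  · have hker : Fin.snoc (α := fun _ ↦ R) v 0 ᵥ* M = 0 := by
      rw [← hv]
      ext j
      simp [vecMul, dotProduct, Fin.sum_univ_castSucc]
    ext j
    simpa [vecMul, dotProduct, Fin.sum_univ_castSucc] using congr($(h.2 _ hker) j.castSucc)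

theorem IsLeftKernelProjector.exists_isUnimodularRow (h : IsLeftKernelProjector M E)
    (hfree : ∀ (N : Submodule R (m → R)) [Module.Finite R N] [Module.Projective R N],
      Module.Free R N) {v₀ : m → R} (hv₀ : v₀ ᵥ* M = 0) (hne : v₀ ≠ 0) :
    ∃ v, v ᵥ* M = 0 ∧ IsUnimodularRow v := by
  let N : Submodule R (m → R) := LinearMap.ker M.vecMulLinear
  let q : (m → R) →ₗ[R] N := E.vecMulLinear.codRestrict N fun v ↦ by
    rw [LinearMap.mem_ker, vecMulLinear_apply, vecMulLinear_apply, vecMul_vecMul, h.1, vecMul_zero]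
  have hq (v : N) : q v = v := Subtype.ext (h.2 v v.2)
  have : Module.Projective R N := .of_split N.subtype q (LinearMap.ext hq)
  have : Module.Finite R N := .of_surjective q fun v ↦ ⟨v, hq v⟩
  have : Module.Free R N := hfree N
  have : Nontrivial N := ⟨⟨v₀, hv₀⟩, 0, fun h ↦ hne congr(($h : m → R))⟩
  have : Nontrivial R := Module.nontrivial R N
  let b := Module.Free.chooseBasis R N
  obtain ⟨i⟩ := b.index_nonempty
  exact ⟨b i, (b i).2, .of_linearMap (b.coord i ∘ₗ q) (by simp [hq])⟩

/-- The scalars `b` such that multiplication by `b` on the left kernel of `M` is induced by a matrix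
annihilating `M`. There is a projector onto the left kernel as soon as they include `1`. -/
def leftKernelMultipliers (M : Matrix m n R) : Ideal R where
  carrier := {b | ∃ E : Matrix m m R, E * M = 0 ∧ ∀ v, v ᵥ* M = 0 → v ᵥ* E = b • v}
  zero_mem' := ⟨0, by simp, by simp⟩
  add_mem' := by
    rintro a b ⟨E, hEM, hE⟩ ⟨E', hEM', hE'⟩
    exact ⟨E + E', by rw [Matrix.add_mul, hEM, hEM', add_zero], fun v hv ↦ by
      rw [vecMul_add, hE v hv, hE' v hv, add_smul]⟩
  smul_mem' := by
    rintro c b ⟨E, hEM, hE⟩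
    exact ⟨c • E, by rw [Matrix.smul_mul, hEM, smul_zero], fun v hv ↦ by
      rw [vecMul_smul, hE v hv, smul_smul, smul_eq_mul]⟩

theorem mem_leftKernelMultipliers_of_mul_mem_minorsSet [IsDomain R] {l c r : ℕ}
    {M : Matrix (Fin l) (Fin c) R} (hr : M.rank = r) {d b : R} (hd0 : d ≠ 0)
    (hd : ∀ a ∈ minorsSet r M, d ∣ a) (hb : d * b ∈ minorsSet r M) :
    b ∈ leftKernelMultipliers M := by
  rcases eq_or_ne b 0 with rfl | hb0
  · exact zero_mem _
  obtain ⟨f, g, -, hg, hdet⟩ := hb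
  have hne : (M.submatrix f g).det ≠ 0 := hdet ▸ mul_ne_zero hd0 hb0
  -- With `S` the submatrix on rows `f` and columns `g`, Cramer's rule reads
  -- `det S • M = M_g * adj S * M_f`, and `M_g * adj S` is divisible by `d` since its entries are
  -- minors of `M`.
  choose B hB using fun (i : Fin l) (k : Fin r) ↦
    dvd_det_submatrix_of_forall_mem_minorsSet hd (Function.update f k i) hg
  have hadj : M.submatrix id g * (M.submatrix f g).adjugate = d • of B := by
    ext i k
    rw [submatrix_mul_adjugate_submatrix_apply, hB]
    rfl
  have hcramer : b • M = of B * M.submatrix f id := by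
    have h := det_submatrix_smul_eq (hr.trans (Fintype.card_fin r).symm) hne
    rw [hadj, ← hdet, Matrix.smul_mul, mul_smul] at h
    exact smul_right_injective _ hd0 h
  refine ⟨b • 1 - of B * (1 : Matrix _ _ R).submatrix f id, ?_, fun v hv ↦ ?_⟩
  · rw [Matrix.sub_mul, Matrix.smul_mul, Matrix.one_mul, hcramer, Matrix.mul_assoc, sub_eq_zero]
    exact congr(of B * $(one_submatrix_mul f (Equiv.refl _) M)).symm
  · have hvB : v ᵥ* of B = 0 := by
      have hvg : v ᵥ* M.submatrix id g = 0 := funext fun k ↦ congr_fun hv (g k)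
      have h : d • (v ᵥ* of B) = 0 := by
        rw [← vecMul_smul, ← hadj, ← vecMul_vecMul, hvg, zero_vecMul]
      exact (smul_eq_zero.1 h).resolve_left hd0
    rw [vecMul_sub, ← vecMul_vecMul, hvB, zero_vecMul, sub_zero, vecMul_smul, vecMul_one]

theorem exists_isLeftKernelProjector [IsDomain R] {l c r : ℕ} {M : Matrix (Fin l) (Fin c) R}
    (hr : M.rank = r) {d : R} (hd : ∀ a ∈ minorsSet r M, d ∣ a)
    (hspan : Ideal.span {b | d * b ∈ minorsSet r M} = ⊤) : ∃ E, IsLeftKernelProjector M E := by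
  have hd0 : d ≠ 0 := by
    rintro rfl
    subst hr
    obtain ⟨f, g, hf, hg, hdet⟩ := exists_strictMono_det_submatrix_ne_zero M
    exact hdet (zero_dvd_iff.1 (hd _ ⟨f, g, hf, hg, rfl⟩))
  have hle : Ideal.span {b | d * b ∈ minorsSet r M} ≤ leftKernelMultipliers M :=
    Ideal.span_le.2 fun b hb ↦ mem_leftKernelMultipliers_of_mul_mem_minorsSet hr hd0 hd hb
  obtain ⟨E, hEM, hE⟩ := hle (hspan ▸ Submodule.mem_top : (1 : R) ∈ _)
  exact ⟨E, hEM, fun v hv ↦ by rw [hE v hv, one_smul]⟩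

end Projector

section RowReduction

variable {A B : Type*} [CommRing A] [CommRing B] {φ : A →+* B}

theorem ReducesToUnit.exists_row_eq_zero {m n : Type*} [Fintype m] [DecidableEq m] {v : m → B}
    (h : ReducesToUnit φ v) {M : Matrix m n B} (hv : v ᵥ* M = 0) (i : m) :
    ∃ U : GL m A, ((U : Matrix m m A).map φ * M) i = 0 := by
  obtain ⟨u, hu, U, hU⟩ := h i
  refine ⟨U⁻¹, ?_⟩
  have hUinv : (U : Matrix m m A).map φ * (↑U⁻¹ : Matrix m m A).map φ = 1 := by
    rw [← Matrix.map_mul, Units.mul_inv, Matrix.map_one _ (map_zero φ) (map_one φ)]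
  have hsingle : Pi.single i u ᵥ* ((↑U⁻¹ : Matrix m m A).map φ * M) = 0 := by
    rw [← hU, vecMul_vecMul, ← Matrix.mul_assoc, hUinv, Matrix.one_mul, hv]
  rw [single_vecMul] at hsingle
  exact hu.smul_eq_zero.1 hsingle

/-- The block diagonal matrix with blocks `U` and `1`, used to let `U` act on the first `s` rows of
a matrix with `s + 1` rows. -/
def bordered {s : ℕ} (U : Matrix (Fin s) (Fin s) A) : Matrix (Fin (s + 1)) (Fin (s + 1)) A :=
  (fromBlocks U 0 0 (1 : Matrix (Fin 1) (Fin 1) A)).submatrix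
    finSumFinEquiv.symm finSumFinEquiv.symm

theorem det_bordered {s : ℕ} (U : Matrix (Fin s) (Fin s) A) : (bordered U).det = U.det := by
  simp [bordered]

theorem map_bordered_mul_castSucc {s : ℕ} {n : Type*} (U : Matrix (Fin s) (Fin s) A)
    (M : Matrix (Fin (s + 1)) n B) (i : Fin s) :
    ((bordered U).map φ * M) i.castSucc = (U.map φ * M.submatrix Fin.castSucc id) i := by
  ext j
  simp [bordered, mul_apply, Fin.sum_univ_castSucc]

theorem map_bordered_mul_last {s : ℕ} {n : Type*} (U : Matrix (Fin s) (Fin s) A)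
    (M : Matrix (Fin (s + 1)) n B) :
    ((bordered U).map φ * M) (Fin.last s) = M (Fin.last s) := by
  ext j
  simp [bordered, mul_apply, Fin.sum_univ_castSucc]

theorem exists_rows_eq_zero_of_isLeftKernelProjector [IsDomain B]
    (hfree : ∀ (s : ℕ) (N : Submodule B (Fin s → B)) [Module.Finite B N] [Module.Projective B N],
      Module.Free B N)
    (hrow : ∀ (s : ℕ) (v : Fin s → B), IsUnimodularRow v → ReducesToUnit φ v)
    {n : Type*} [Fintype n] {s : ℕ} {M : Matrix (Fin s) n B} {E : Matrix (Fin s) (Fin s) B}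
    (h : IsLeftKernelProjector M E) :
    ∃ U : Matrix (Fin s) (Fin s) A, IsUnit U.det ∧
      ∀ i : Fin s, M.rank ≤ i → (U.map φ * M) i = 0 := by
  induction s with
  | zero => exact ⟨1, by simp, fun i ↦ i.elim0⟩
  | succ s ih =>
    by_cases hker : ∀ v, v ᵥ* M = 0 → v = 0
    · refine ⟨1, by simp, fun i hi ↦ ?_⟩
      rw [rank_eq_of_vecMul_eq_zero_imp hker, Fintype.card_fin] at hi
      omega
    push Not at hker
    obtain ⟨v₀, hv₀, hne⟩ := hker
    obtain ⟨v, hv, hunimod⟩ := h.exists_isUnimodularRow (hfree _) hv₀ hne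
    obtain ⟨V, hlast⟩ := (hrow _ v hunimod).exists_row_eq_zero hv (Fin.last s)
    set W := (V : Matrix (Fin (s + 1)) (Fin (s + 1)) A).map φ
    have hW : W * (↑V⁻¹ : Matrix (Fin (s + 1)) (Fin (s + 1)) A).map φ = 1 := by
      rw [← Matrix.map_mul, Units.mul_inv, Matrix.map_one _ (map_zero φ) (map_one φ)]
    obtain ⟨U, hU, hzero⟩ := ih ((h.conj hW).submatrix_castSucc hlast)
    have hrank : ((W * M).submatrix Fin.castSucc id).rank ≤ M.rank :=
      (rank_submatrix_le _ _ _).trans (rank_mul_le_right _ _)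
    refine ⟨bordered U * V, ?_, fun i hi ↦ ?_⟩
    · rw [det_mul, det_bordered]
      exact hU.mul (isUnits_det_units V)
    · rw [Matrix.map_mul, Matrix.mul_assoc]
      induction i using Fin.lastCases with
      | last => rw [map_bordered_mul_last, hlast]
      | cast i => rw [map_bordered_mul_castSucc, hzero i (hrank.trans hi)]

end RowReduction

end LeftKernel

section Polynomials

universe u

open Matrix

theorem exists_rows_eq_zero_mvPolynomial {R : Type*} {L : Type u} [CommRing R] [Field L]
    {φ : R →+* L} (hφ : Function.Surjective φ) {m s : ℕ} {n : Type*} [Fintype n]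
    {M : Matrix (Fin s) n (MvPolynomial (Fin m) L)}
    {E : Matrix (Fin s) (Fin s) (MvPolynomial (Fin m) L)} (h : IsLeftKernelProjector M E) :
    ∃ U : Matrix (Fin s) (Fin s) (MvPolynomial (Fin m) R), IsUnit U.det ∧
      ∀ i : Fin s, M.rank ≤ i → (U.map (MvPolynomial.map φ) * M) i = 0 :=
  exists_rows_eq_zero_of_isLeftKernelProjector (fun _ N ↦ free_mvPolynomial_of_projective N)
    (fun _ _ hv ↦ hv.reducesToUnit hφ) h

variable {K : Type*} [Field K] (n : ℕ)

/-- The identification `K[x₁, …, x_{n+1}] ≃ K[x₁][x₂, …, x_{n+1}]`. -/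
noncomputable def splitFirstVariable :
    MvPolynomial (Fin (n + 1)) K ≃ₐ[K] MvPolynomial (Fin n) (Polynomial K) :=
  (MvPolynomial.renameEquiv K (finSuccEquiv n)).trans (MvPolynomial.optionEquivRight K (Fin n))

theorem splitFirstVariable_polyImage (p : Polynomial K) :
    splitFirstVariable n (polyImage n p) = MvPolynomial.C p := by
  suffices h : (splitFirstVariable n).toAlgHom.comp (Polynomial.aeval (MvPolynomial.X 0)) =
      IsScalarTower.toAlgHom K (Polynomial K) (MvPolynomial (Fin n) (Polynomial K)) from
    congr($h p)
  ext
  simp [splitFirstVariable]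

theorem piBar_eq_map_splitFirstVariable (p : Polynomial K) (a : MvPolynomial (Fin (n + 1)) K) :
    piBar n p a =
      MvPolynomial.map (Ideal.Quotient.mk (Ideal.span {p})) (splitFirstVariable n a) := by
  suffices h : piBar n p = (MvPolynomial.map (Ideal.Quotient.mk (Ideal.span {p}))).comp
      (splitFirstVariable n).toRingEquiv.toRingHom from congr($h a)
  have hC (x : K) : algebraMap K (Polynomial K ⧸ Ideal.span {p}) x =
      Ideal.Quotient.mk (Ideal.span {p}) (Polynomial.C x) := rfl
  ext i
  · simp [splitFirstVariable, piBar, hC]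
  · refine Fin.cases ?_ (fun j ↦ ?_) i <;> simp [splitFirstVariable, piBar]

theorem polyImage_dvd_of_piBar_eq_zero {n : ℕ} {p : Polynomial K}
    {a : MvPolynomial (Fin (n + 1)) K} (ha : piBar n p a = 0) : polyImage n p ∣ a := by
  rw [piBar_eq_map_splitFirstVariable] at ha
  rw [← map_dvd_iff (splitFirstVariable n), splitFirstVariable_polyImage]
  exact (MvPolynomial.C_dvd_iff_map_hom_eq_zero _ p
    (fun q ↦ by rw [Ideal.Quotient.eq_zero_iff_mem, Ideal.mem_span_singleton]) _).2 ha

end Polynomials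

theorem stmt7_general {K : Type*} [Field K] {n l c r : ℕ} (p : Polynomial K) (hp : Irreducible p)
    (F : Matrix (Fin l) (Fin c) (MvPolynomial (Fin (n + 1)) K))
    (hrank : (F.map (piBar n p)).rank = r)
    (hJ : ∃ d, (∀ a ∈ minorsSet r (F.map (piBar n p)), d ∣ a) ∧
      Ideal.span {b | d * b ∈ minorsSet r (F.map (piBar n p))} = ⊤) :
    ∃ (U : Matrix (Fin l) (Fin l) (MvPolynomial (Fin (n + 1)) K))
      (G : Matrix (Fin l) (Fin c) (MvPolynomial (Fin (n + 1)) K)),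
      IsUnit U.det ∧
      U * F = Matrix.diagonal (fun i : Fin l ↦
        if (i : ℕ) < r then 1 else polyImage n p) * G := by
  have : (Ideal.span {p}).IsMaximal := PrincipalIdealRing.isMaximal_of_irreducible hp
  let _ : Field (Polynomial K ⧸ Ideal.span {p}) := Ideal.Quotient.field _
  obtain ⟨d, hd, hspan⟩ := hJ
  obtain ⟨E, hE⟩ := exists_isLeftKernelProjector hrank hd hspan
  obtain ⟨V, hV, hzero⟩ := exists_rows_eq_zero_mvPolynomial
    (Ideal.Quotient.mk_surjective (I := Ideal.span {p})) hE
  let U := V.map (splitFirstVariable n).symm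
  have hU : U.map (piBar n p) = V.map (MvPolynomial.map (Ideal.Quotient.mk (Ideal.span {p}))) := by
    ext1 i j
    simp [U, piBar_eq_map_splitFirstVariable]
  have hdvd (i : Fin l) (j : Fin c) :
      (if (i : ℕ) < r then 1 else polyImage n p) ∣ (U * F) i j := by
    split_ifs with hi
    · exact one_dvd _
    · apply polyImage_dvd_of_piBar_eq_zero
      have h := congr_fun (hzero i (hrank.le.trans (not_lt.1 hi))) j
      rwa [← hU, ← Matrix.map_mul] at h
  choose G hG using hdvd
  refine ⟨U, Matrix.of G, ?_, ?_⟩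
  · have hdet : (splitFirstVariable n).symm V.det = U.det := by
      rw [AlgEquiv.map_det]
      rfl
    exact hdet ▸ hV.map _
  · ext i j
    rw [Matrix.diagonal_mul, hG]
    rfl

/-- let `F ∈ A^{l×l}` with `p ∈ K[x₁]` irreducible.  If `rank F̄ = r`
and the `r × r` reduced minors of `F̄` generate the unit ideal of `Ā`
(`J_r(F̄) = Ā`), then there is `U ∈ GL_l(A)` with
`U·F = diag(1, …, 1, p, …, p)·G` (with `r` ones and `l − r` entries `p`)
for some `G ∈ A^{l×l}`. -/
theorem stmt7 {K : Type*} [Field K] {n l r : ℕ} (p : Polynomial K) (hp : Irreducible p)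
    (F : Matrix (Fin l) (Fin l) (MvPolynomial (Fin (n + 1)) K))
    (hrank : (F.map (piBar n p)).rank = r)
    (hJ : ∃ d, IsGcdOf d (minorsSet r (F.map (piBar n p))) ∧
      Ideal.span {b | d * b ∈ minorsSet r (F.map (piBar n p))} = ⊤) :
    ∃ (U G : Matrix (Fin l) (Fin l) (MvPolynomial (Fin (n + 1)) K)),
      IsUnit U.det ∧
      U * F = Matrix.diagonal (fun i : Fin l =>
        if (i : ℕ) < r then 1 else polyImage n p) * G := by
  obtain ⟨d, hd, hspan⟩ := hJ
  exact stmt7_general p hp F hrank ⟨d, hd.1, hspan⟩
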